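/- Fourier inversion / completeness of the hyperoctahedral Hall–Littlewood functions: assume t and t_0, t_1, t_2, t_3 are real parameters in (−1,1)∖{0}. Then for each λ ∈ Λ the integral ∫_{[0,2π]^n} |P_λ(ξ) Δ(ξ)|^2 dξ is finite and strictly positive, so that ν_λ = (∫_{[0,2π]^n} |P_λ(ξ) Δ(ξ)|^2 dξ)^{−1} is well defined; moreover, for every f : Λ → ℂ with Σ_{λ∈Λ} |f(λ)|^2 ν_λ < ∞, the series f̂(ξ) = Σ_{λ∈Λ} f(λ) · conj(P_λ(ξ)) · ν_λ converges in the Hilbert space L^2([0,2π]^n, |Δ(ξ)|^2 dξ), and one has the inversion formula f(λ) = ∫_{[0,2π]^n} f̂(ξ) P_λ(ξ) |Δ(ξ)|^2 dξ for every λ ∈ Λ. -/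

import Mathlib

open Finset Complex MeasureTheory

noncomputable section

namespace QB

/-- The partition predicate: `lam` is weakly decreasing with nonnegative parts. -/
def IsPart (n : ℕ) (lam : Fin n → ℤ) : Prop :=
  (∀ i j : Fin n, i ≤ j → lam j ≤ lam i) ∧ ∀ i, 0 ≤ lam i

instance (n : ℕ) (lam : Fin n → ℤ) : Decidable (IsPart n lam) := by
  unfold IsPart; infer_instance

/-- The cone `Λ` of partitions with at most `n` parts. -/
def Lam (n : ℕ) := {lam : Fin n → ℤ // IsPart n lam}

/-- `λ + e_{J+} - e_{J-}`. -/
def shift (n : ℕ) (lam : Fin n → ℤ) (Jp Jm : Finset (Fin n)) : Fin n → ℤ :=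
  fun i => lam i + (if i ∈ Jp then 1 else 0) - (if i ∈ Jm then 1 else 0)

/-- `ε_j(J+, J-)`. -/
def eps (n : ℕ) (Jp Jm : Finset (Fin n)) (i : Fin n) : ℤ :=
  if i ∈ Jp then 1 else if i ∈ Jm then -1 else 0

/-- the exponent `n - j` in paper indexing (`j = (i : ℕ) + 1`). -/
def en (n : ℕ) (i : Fin n) : ℤ := (n : ℤ) - (i : ℤ) - 1

/-- `t^{n-j}` in paper indexing. -/
def tn (n : ℕ) (t : ℂ) (i : Fin n) : ℂ := t ^ en n i

/-- the ratio `(1-t^{1+k-j})/(1-t^{k-j})` in paper indexing. -/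
def rat (n : ℕ) (t : ℂ) (j k : Fin n) : ℂ :=
  (1 - t ^ ((k : ℤ) - (j : ℤ) + 1)) / (1 - t ^ ((k : ℤ) - (j : ℤ)))

/-- `∏_{1 ≤ j < k ≤ n, λ_j = λ_k, ε_j > ε_k} (1-t^{1+k-j})/(1-t^{k-j})`. -/
def pairProd (n : ℕ) (t : ℂ) (lam : Fin n → ℤ) (Jp Jm : Finset (Fin n)) : ℂ :=
  ∏ j : Fin n, ∏ k : Fin n,
    if j < k ∧ lam j = lam k ∧ eps n Jp Jm j > eps n Jp Jm k then rat n t j k else 1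

/-- the coefficient `W_{J+,J-}(λ)` (three-parameter case). -/
def W3 (n : ℕ) (t t0 t1 t2 : ℂ) (lam : Fin n → ℤ) (Jp Jm : Finset (Fin n)) : ℂ :=
  (∏ j ∈ Jp, if lam j = 0 then
      (1 - t0 * t1 * tn n t j) * (1 - t0 * t2 * tn n t j) * (1 - t1 * t2 * tn n t j) else 1)
  * pairProd n t lam Jp Jm

/-- the coefficient `U_{K,m}(λ)` (three-parameter case). -/
def U3 (n : ℕ) (t t0 t1 t2 : ℂ) (K : Finset (Fin n)) (m : ℕ) (lam : Fin n → ℤ) : ℂ :=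
  (-1 : ℂ) ^ m *
  ∑ p ∈ (univ : Finset (Finset (Fin n) × Finset (Fin n))).filter
      (fun p => p.1 ⊆ K ∧ p.2 ⊆ K ∧ Disjoint p.1 p.2 ∧ p.1.card + p.2.card = m),
    (∏ j ∈ p.1, if lam j = 0 then (1 - t0 * t1 * tn n t j) * (1 - t0 * t2 * tn n t j) else 1) *
    (∏ j ∈ p.2, if lam j = 1 then 1 - t1 * t2 * tn n t j else 1) *
    (∏ j ∈ K, ∏ k ∈ K,
        if lam j = lam k ∧ eps n p.1 p.2 j > eps n p.1 p.2 k then rat n t j k else 1) *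
    (∏ j ∈ p.2, ∏ k ∈ p.1, if lam j = lam k + 1 then rat n t j k else 1) *
    (∏ j ∈ K, t0 ^ (-(eps n p.1 p.2 j))) *
    (∏ j ∈ K, ∏ k ∈ K,
        if j < k ∧ eps n p.1 p.2 j ≠ eps n p.1 p.2 k ∧ eps n p.1 p.2 k = 0
        then t ^ (-(eps n p.1 p.2 j)) else 1) *
    (∏ j ∈ K, ∏ k ∈ K,
        if j < k ∧ lam j = lam k ∧ eps n p.1 p.2 k - eps n p.1 p.2 j = 1 then t⁻¹ else 1)

/-- the difference operator `H_l` (three-parameter case). -/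
def H3 (n : ℕ) (t t0 t1 t2 : ℂ) (l : ℕ) (f : Lam n → ℂ) : Lam n → ℂ := fun lam =>
  ∑ p ∈ (univ : Finset (Finset (Fin n) × Finset (Fin n))).filter
      (fun p => Disjoint p.1 p.2 ∧ p.1.card + p.2.card ≤ l),
    if h : IsPart n (shift n lam.1 p.1 p.2) then
      U3 n t t0 t1 t2 (p.1ᶜ ∩ p.2ᶜ) (l - (p.1.card + p.2.card)) lam.1 *
      W3 n t t0 t1 t2 lam.1 p.1 p.2 * f ⟨_, h⟩
    else 0

/-- the Pieri coefficient `V_{J+,J-}(λ)` (three-parameter case). -/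
def V3 (n : ℕ) (t t0 t1 t2 : ℂ) (lam : Fin n → ℤ) (Jp Jm : Finset (Fin n)) : ℂ :=
  (∏ j ∈ Jp, if lam j = 0 then (1 - t0 * t1 * tn n t j) * (1 - t0 * t2 * tn n t j) else 1) *
  (∏ j ∈ Jm, if lam j = 1 then 1 - t1 * t2 * tn n t j else 1) *
  pairProd n t lam Jp Jm *
  ∏ j : Fin n, t0 ^ (-(eps n Jp Jm j)) * t ^ (-(en n j * eps n Jp Jm j))

/-- the gauge function `h(λ)` (three-parameter case). -/
def h3 (n : ℕ) (t t0 t1 t2 : ℂ) (lam : Fin n → ℤ) : ℂ :=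
  ∏ j : Fin n, if 0 < lam j then
    t0 ^ (lam j) * t ^ (en n j * lam j) * (1 - t1 * t2 * tn n t j) else 1

/-- action of the hyperoctahedral group `W_n = S_n ⋉ {-1,1}^n` on `ξ ∈ ℂ^n`. -/
def act (n : ℕ) (w : Equiv.Perm (Fin n) × (Fin n → Bool)) (xi : Fin n → ℂ) : Fin n → ℂ :=
  fun j => (if w.2 j then -1 else 1) * xi (w.1 j)

/-- the factor `C_λ(ξ)`. -/
def Cf (n : ℕ) (t t0 t1 t2 t3 : ℂ) (lam : Fin n → ℤ) (xi : Fin n → ℂ) : ℂ :=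
  (∏ j : Fin n, ∏ k : Fin n, if j < k then
      ((1 - t * exp (I * (xi j - xi k))) * (1 - t * exp (I * (xi j + xi k)))) /
      ((1 - exp (I * (xi j - xi k))) * (1 - exp (I * (xi j + xi k)))) else 1) *
  ∏ j : Fin n, if 0 < lam j then
      ((1 - t0 * exp (I * xi j)) * (1 - t1 * exp (I * xi j)) *
       (1 - t2 * exp (I * xi j)) * (1 - t3 * exp (I * xi j))) / (1 - exp (2 * I * xi j))
    else 1

/-- the normalization constant `c_λ`. -/
def ccf (n : ℕ) (t t0 t1 t2 t3 : ℂ) (lam : Fin n → ℤ) : ℂ :=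
  ∏ j : Fin n,
    (t0 ^ (lam j) * t ^ (en n j * lam j) * (1 - t)) /
    ((1 - t ^ ((j : ℤ) + 1)) * (if lam j = 0 then 1 + tn n t j else 1) *
     (if lam j = 0 then 1 else
        (1 - t0 * t1 * tn n t j) * (1 - t0 * t2 * tn n t j) * (1 - t0 * t3 * tn n t j)))

/-- the hyperoctahedral Hall–Littlewood function `P_λ(ξ)`. -/
def P (n : ℕ) (t t0 t1 t2 t3 : ℂ) (lam : Fin n → ℤ) (xi : Fin n → ℂ) : ℂ :=
  ccf n t t0 t1 t2 t3 lam *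
  ∑ w : Equiv.Perm (Fin n) × (Fin n → Bool),
    Cf n t t0 t1 t2 t3 lam (act n w xi) *
    exp (-I * ∑ j : Fin n, (lam j : ℂ) * act n w xi j)

/-- the symmetric function `E_l(ξ)` (eigenvalue). -/
def E (n : ℕ) (t t0 : ℂ) (l : ℕ) (xi : Fin n → ℂ) : ℂ :=
  ∑ S ∈ Finset.powersetCard l (univ : Finset (Fin n)),
    if h : S.card = l then
      ∏ k : Fin l,
        (2 * Complex.cos (xi ((S.orderIsoOfFin h k).1)) -
         t0 * t ^ ((((S.orderIsoOfFin h k).1 : ℕ) : ℤ) - (k : ℤ)) -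
         t0⁻¹ * t ^ (-((((S.orderIsoOfFin h k).1 : ℕ) : ℤ) - (k : ℤ))))
    else 0

/-- `ξ` is generic: all factors `C_μ(wξ)` are defined (no vanishing denominators). -/
def Generic (n : ℕ) (xi : Fin n → ℂ) : Prop :=
  ∀ w : Equiv.Perm (Fin n) × (Fin n → Bool),
    (∀ j k : Fin n, j < k →
      1 - exp (I * (act n w xi j - act n w xi k)) ≠ 0 ∧
      1 - exp (I * (act n w xi j + act n w xi k)) ≠ 0) ∧
    ∀ j : Fin n, 1 - exp (2 * I * act n w xi j) ≠ 0

/-- the weight function `Δ(ξ)`. -/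
def Dlt (n : ℕ) (t t0 t1 t2 t3 : ℂ) (xi : Fin n → ℂ) : ℂ :=
  (∏ j : Fin n, ∏ k : Fin n, if j < k then
      ((1 - exp (I * (xi j - xi k))) * (1 - exp (I * (xi j + xi k)))) /
      ((1 - t * exp (I * (xi j - xi k))) * (1 - t * exp (I * (xi j + xi k)))) else 1) *
  ∏ j : Fin n, (1 - exp (2 * I * xi j)) /
    ((1 - t0 * exp (I * xi j)) * (1 - t1 * exp (I * xi j)) *
     (1 - t2 * exp (I * xi j)) * (1 - t3 * exp (I * xi j)))

/-- `m_0(λ)`. -/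
def m0c (n : ℕ) (lam : Fin n → ℤ) : ℕ := (univ.filter fun j => lam j = 0).card

/-- `m_1(λ)`. -/
def m1c (n : ℕ) (lam : Fin n → ℤ) : ℕ := (univ.filter fun j => lam j = 1).card

/-- `m_1^+(λ)` relative to `J_+`. -/
def m1p (n : ℕ) (lam : Fin n → ℤ) (Jp : Finset (Fin n)) : ℕ :=
  (Jp.filter fun j => lam j = 1).card

/-- the Pieri coefficient `V_{J+,J-}(λ)` (four-parameter case). -/
def V4 (n : ℕ) (t t0 t1 t2 t3 : ℂ) (lam : Fin n → ℤ) (Jp Jm : Finset (Fin n)) : ℂ :=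
  (∏ j ∈ Jp, if lam j = 0 then
      ((1 - t0*t1*t2*t3 * t ^ (en n j + (m0c n lam : ℤ) + (m1c n lam : ℤ) - (m1p n lam Jp : ℤ))) *
       ((1 - t0 * t1 * tn n t j) * (1 - t0 * t2 * tn n t j) * (1 - t0 * t3 * tn n t j))) /
      ((1 - t0*t1*t2*t3 * t ^ (2 * en n j)) * (1 - t0*t1*t2*t3 * t ^ (2 * en n j + 1)))
    else 1) *
  (∏ j ∈ Jp, if lam j = 1 then 1 - t0*t1*t2*t3 * t ^ (en n j + (m0c n lam : ℤ)) else 1) *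
  (∏ j ∈ Jm, if lam j = 1 then
      ((1 - t0*t1*t2*t3 * t ^ (en n j - 1)) *
       ((1 - t1 * t2 * tn n t j) * (1 - t1 * t3 * tn n t j) * (1 - t2 * t3 * tn n t j))) /
      ((1 - t0*t1*t2*t3 * t ^ (2 * en n j)) * (1 - t0*t1*t2*t3 * t ^ (2 * en n j - 1)))
    else 1) *
  pairProd n t lam Jp Jm *
  ∏ j : Fin n, t0 ^ (-(eps n Jp Jm j)) * t ^ (-(en n j * eps n Jp Jm j))

/-- the coefficient `U_{K,m}(λ)` (four-parameter case). -/
def U4 (n : ℕ) (t t0 t1 t2 t3 : ℂ) (K : Finset (Fin n)) (m : ℕ) (lam : Fin n → ℤ) : ℂ :=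
  (-1 : ℂ) ^ m *
  ∑ p ∈ (univ : Finset (Finset (Fin n) × Finset (Fin n))).filter
      (fun p => p.1 ⊆ K ∧ p.2 ⊆ K ∧ Disjoint p.1 p.2 ∧ p.1.card + p.2.card = m),
    (∏ j ∈ p.1, if lam j = 0 then
        ((1 - t0 * t1 * tn n t j) * (1 - t0 * t2 * tn n t j) * (1 - t0 * t3 * tn n t j)) /
        (1 - t0*t1*t2*t3 * t ^ (2 * en n j)) else 1) *
    (∏ j ∈ p.1, if lam j = 1 then 1 - t0*t1*t2*t3 * t ^ (en n j) else 1) *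
    (∏ j ∈ p.2, if lam j = 1 then
        ((1 - t1 * t2 * tn n t j) * (1 - t1 * t3 * tn n t j) * (1 - t2 * t3 * tn n t j)) /
        (1 - t0*t1*t2*t3 * t ^ (2 * en n j)) else 1) *
    (∏ j ∈ K, ∏ k ∈ K,
        if j < k ∧ (eps n p.1 p.2 j + eps n p.1 p.2 k = -2 ∨ eps n p.1 p.2 j + eps n p.1 p.2 k = 1 ∨
              eps n p.1 p.2 j + eps n p.1 p.2 k = 2) ∧
           lam j = 1 ∧ lam k = (if eps n p.1 p.2 k = -1 then 1 else 0)
        then (1 - t0*t1*t2*t3 * t ^ (2 * (n : ℤ) + 1 - ((j : ℤ) + 1) - ((k : ℤ) + 1))) /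
             (1 - t0*t1*t2*t3 * t ^ (2 * (n : ℤ) - ((j : ℤ) + 1) - ((k : ℤ) + 1))) else 1) *
    (∏ j ∈ p.1 ∪ p.2, ∏ k ∈ K \ p.2,
        if j < k ∧ (eps n p.1 p.2 k - eps n p.1 p.2 j = 0 ∨ eps n p.1 p.2 k - eps n p.1 p.2 j = 1) ∧
           lam j = (if eps n p.1 p.2 j = -1 then 1 else 0) ∧ lam k = 0
        then (1 - t0*t1*t2*t3 * t ^ (2 * (n : ℤ) - 1 - ((j : ℤ) + 1) - ((k : ℤ) + 1))) /
             (1 - t0*t1*t2*t3 * t ^ (2 * (n : ℤ) - ((j : ℤ) + 1) - ((k : ℤ) + 1))) else 1) *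
    (∏ j ∈ K, ∏ k ∈ K,
        if lam j = lam k ∧ eps n p.1 p.2 j > eps n p.1 p.2 k then rat n t j k else 1) *
    (∏ j ∈ p.2, ∏ k ∈ p.1, if lam j = lam k + 1 then rat n t j k else 1) *
    (∏ j ∈ K, t0 ^ (-(eps n p.1 p.2 j))) *
    (∏ j ∈ K, ∏ k ∈ K,
        if j < k ∧ eps n p.1 p.2 j ≠ eps n p.1 p.2 k ∧ eps n p.1 p.2 k = 0
        then t ^ (-(eps n p.1 p.2 j)) else 1) *
    (∏ j ∈ K, ∏ k ∈ K,
        if j < k ∧ lam j = lam k ∧ eps n p.1 p.2 k - eps n p.1 p.2 j = 1 then t⁻¹ else 1)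

/-- the coefficient `W_{J+,J-}(λ)` (four-parameter case). -/
def W4 (n : ℕ) (t t0 t1 t2 t3 : ℂ) (lam : Fin n → ℤ) (Jp Jm : Finset (Fin n)) : ℂ :=
  (∏ j ∈ Jp, if lam j = 1 then 1 - t0*t1*t2*t3 * t ^ (en n j + (m0c n lam : ℤ)) else 1) *
  pairProd n t lam Jp Jm *
  ∏ j ∈ Jp, if lam j = 0 then
    ((1 - t0*t1*t2*t3 * t ^ (en n j - 1)) *
     (1 - t0*t1*t2*t3 * t ^ (en n j + (m0c n lam : ℤ) + (m1c n lam : ℤ) - (m1p n lam Jp : ℤ))) *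
     ((1 - t0 * t1 * tn n t j) * (1 - t0 * t2 * tn n t j) * (1 - t0 * t3 * tn n t j) *
      (1 - t1 * t2 * tn n t j) * (1 - t1 * t3 * tn n t j) * (1 - t2 * t3 * tn n t j))) /
    ((1 - t0*t1*t2*t3 * t ^ (2 * en n j - 1)) * (1 - t0*t1*t2*t3 * t ^ (2 * en n j)) ^ 2 *
     (1 - t0*t1*t2*t3 * t ^ (2 * en n j + 1)))
  else 1

/-- the difference operator `H_l` (four-parameter case). -/
def H4 (n : ℕ) (t t0 t1 t2 t3 : ℂ) (l : ℕ) (f : Lam n → ℂ) : Lam n → ℂ := fun lam =>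
  ∑ p ∈ (univ : Finset (Finset (Fin n) × Finset (Fin n))).filter
      (fun p => Disjoint p.1 p.2 ∧ p.1.card + p.2.card ≤ l),
    if h : IsPart n (shift n lam.1 p.1 p.2) then
      U4 n t t0 t1 t2 t3 (p.1ᶜ ∩ p.2ᶜ) (l - (p.1.card + p.2.card)) lam.1 *
      W4 n t t0 t1 t2 t3 lam.1 p.1 p.2 * f ⟨_, h⟩
    else 0

/-- the gauge function `h(λ)` (four-parameter case). -/
def h4 (n : ℕ) (t t0 t1 t2 t3 : ℂ) (lam : Fin n → ℤ) : ℂ :=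
  ∏ j : Fin n,
    t0 ^ (lam j) * t ^ (en n j * lam j) *
    (if lam j = 0 then 1 - t0*t1*t2*t3 * t ^ (en n j + (m0c n lam : ℤ) - 1) else 1) *
    (if lam j = 0 then 1 else
      (1 - t1 * t2 * tn n t j) * (1 - t1 * t3 * tn n t j) * (1 - t2 * t3 * tn n t j))

/-- the box `[0, 2π]^n`. -/
def box (n : ℕ) : Set (Fin n → ℝ) := Set.univ.pi fun _ => Set.Icc 0 (2 * Real.pi)


/-- the weighted measure `|Δ(ξ)|² dξ` on the box `[0,2π]^n`. -/
def wmeas (n : ℕ) (t t0 t1 t2 t3 : ℝ) : Measure (Fin n → ℝ) :=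
  ((volume : Measure (Fin n → ℝ)).restrict (box n)).withDensity
    fun xi => ENNReal.ofReal
      ((norm (Dlt n (t : ℂ) (t0 : ℂ) (t1 : ℂ) (t2 : ℂ) (t3 : ℂ)
        (fun j => (xi j : ℂ)))) ^ 2)

/-- the normalization integral `∫_{[0,2π]^n} |P_λ(ξ) Δ(ξ)|² dξ`. -/
def nInt (n : ℕ) (t t0 t1 t2 t3 : ℝ) (lam : Fin n → ℤ) : ℝ :=
  ∫ xi in box n,
    (norm (P n (t : ℂ) (t0 : ℂ) (t1 : ℂ) (t2 : ℂ) (t3 : ℂ) lam (fun j => (xi j : ℂ)) *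
      Dlt n (t : ℂ) (t0 : ℂ) (t1 : ℂ) (t2 : ℂ) (t3 : ℂ) (fun j => (xi j : ℂ)))) ^ 2



/-- periodicity with respect to the lattice of multiples of 2π -/
def Per (n : ℕ) (Φ : (Fin n → ℝ) → ℂ) : Prop :=
  ∀ (ξ : Fin n → ℝ) (k : Fin n → ℤ), Φ (fun j => ξ j + 2 * Real.pi * k j) = Φ ξ

lemma two_pi_unit : IsUnit (2 * Real.pi) := (by positivity : (2 * Real.pi) ≠ 0).isUnit

/-- the basis of the period lattice -/
def pbasis (n : ℕ) : Module.Basis (Fin n) ℝ (Fin n → ℝ) :=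
  (Pi.basisFun ℝ (Fin n)).isUnitSMul (w := fun _ => 2 * Real.pi) (fun _ => two_pi_unit)

lemma pbasis_fd (n : ℕ) : ZSpan.fundamentalDomain (pbasis n) =
    Set.univ.pi fun _ => Set.Ico 0 (2 * Real.pi) := by
  ext x
  have hp : (0:ℝ) < 2 * Real.pi := by positivity
  simp only [ZSpan.mem_fundamentalDomain, pbasis, Module.Basis.repr_isUnitSMul, Set.mem_pi,
    Set.mem_univ, true_imp_iff, Set.mem_Ico]
  refine forall_congr' fun i => ?_
  have : ((two_pi_unit.unit⁻¹ : ℝˣ) : ℝ) = (2 * Real.pi)⁻¹ := by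
    rw [Units.val_inv_eq_inv_val]; rfl
  simp only [Units.smul_def, this, Pi.basisFun_repr, smul_eq_mul]
  constructor
  · rintro ⟨h1, h2⟩
    constructor
    · have := mul_nonneg hp.le h1
      rwa [mul_inv_cancel_left₀ hp.ne'] at this
    · have := mul_lt_mul_of_pos_left h2 hp
      rwa [mul_inv_cancel_left₀ hp.ne', mul_one] at this
  · rintro ⟨h1, h2⟩
    refine ⟨by positivity, ?_⟩
    rw [inv_mul_lt_iff₀ hp]; simpa using h2

lemma box_ae (n : ℕ) : (Set.univ.pi fun _ : Fin n => Set.Ico 0 (2 * Real.pi)) =ᵐ[volume] box n := by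
  unfold box
  rw [Set.pi_univ_Icc]
  exact Measure.univ_pi_Ico_ae_eq_Icc (μ := fun _ : Fin n => (volume : Measure ℝ))

lemma Per.vadd {n : ℕ} {Φ : (Fin n → ℝ) → ℂ} (h : Per n Φ)
    (g : (Submodule.span ℤ (Set.range (pbasis n))).toAddSubgroup) (x : Fin n → ℝ) : Φ (g +ᵥ x) = Φ x := by
  obtain ⟨g, hg⟩ := g
  rw [Submodule.mem_toAddSubgroup, Submodule.mem_span_range_iff_exists_fun] at hg
  obtain ⟨c, rfl⟩ := hg
  rw [← h x c]
  congr 1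
  funext j
  change (∑ i, c i • (pbasis n) i) j + x j = _
  have : ∀ i, (c i • (pbasis n) i) j = if j = i then 2 * Real.pi * c i else 0 := by
    intro i
    simp only [pbasis, Module.Basis.isUnitSMul_apply, Pi.basisFun_apply, Pi.smul_apply,
      Pi.single_apply]
    split_ifs
    · simp; ring
    · simp
  rw [Finset.sum_apply]
  simp only [this]
  simp
  ring

lemma box_translate {n : ℕ} {Φ : (Fin n → ℝ) → ℂ} (h : Per n Φ) (v : Fin n → ℝ) :
    ∫ ξ in box n, Φ (v + ξ) = ∫ ξ in box n, Φ ξ := by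
  rw [← setIntegral_congr_set (box_ae n), ← setIntegral_congr_set (box_ae n), ← pbasis_fd]
  have hfd := ZSpan.isAddFundamentalDomain' (pbasis n) (volume : Measure (Fin n → ℝ))
  haveI : Countable (Submodule.span ℤ (Set.range (pbasis n))).toAddSubgroup :=
    inferInstanceAs (Countable (Submodule.span ℤ (Set.range (pbasis n))))
  have hfd2 := hfd.vadd_of_comm v
  have h1 := hfd2.setIntegral_eq hfd (f := Φ) (fun g x => h.vadd g x)
  rw [← h1]
  have := (measurePreserving_add_left (volume : Measure (Fin n → ℝ)) v).setIntegral_image_emb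
    (measurableEmbedding_addLeft v) Φ (ZSpan.fundamentalDomain (pbasis n))
  exact this.symm

/-- complex differentiability on the closed unit disc -/
def Disc (R : ℂ → ℂ) : Prop := ∀ q : ℂ, ‖q‖ ≤ 1 → DifferentiableAt ℂ R q

/-- exponential of an integral linear form -/
def chi {n : ℕ} (N : Fin n → ℤ) (η : Fin n → ℝ) : ℂ :=
  Complex.exp (-I * ∑ j, (N j : ℂ) * (η j : ℂ))

/-- pairing -/
def pr {n : ℕ} (N ω : Fin n → ℤ) : ℤ := ∑ j, N j * ω j

/-- Functions on the torus with holomorphic extension along the direction `ω`. -/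
def Good {n : ℕ} (ω : Fin n → ℤ) (M : ℤ) (F F0 : (Fin n → ℝ) → ℂ) : Prop :=
  Continuous F ∧ Per n F ∧ ∀ η, ∃ G : ℂ → ℂ, Disc G ∧
    (∀ s : ℝ, F (fun j => η j - s * ω j) = Complex.exp (I * s) ^ M * G (Complex.exp (I * s))) ∧
    G 0 = F0 η

lemma Good.mul {n : ℕ} {ω : Fin n → ℤ} {M M' : ℤ} {F F0 F' F0' : (Fin n → ℝ) → ℂ}
    (h : Good ω M F F0) (h' : Good ω M' F' F0') :
    Good ω (M + M') (fun η => F η * F' η) (fun η => F0 η * F0' η) := by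
  obtain ⟨h1, h2, h3⟩ := h
  obtain ⟨h1', h2', h3'⟩ := h'
  refine ⟨h1.mul h1', fun ξ k => by simp only [h2 ξ k, h2' ξ k], fun η => ?_⟩
  obtain ⟨G, g1, g2, g3⟩ := h3 η
  obtain ⟨G', g1', g2', g3'⟩ := h3' η
  refine ⟨fun q => G q * G' q, fun q hq => (g1 q hq).mul (g1' q hq), fun s => ?_, by simp only [g3, g3']⟩
  simp only [g2, g2']
  rw [zpow_add₀ (Complex.exp_ne_zero _)]; ring

lemma Good.one {n : ℕ} {ω : Fin n → ℤ} : Good ω 0 (fun _ => 1) (fun _ => 1) :=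
  ⟨continuous_const, fun _ _ => rfl, fun _ => ⟨fun _ => 1, fun _ _ => differentiableAt_const _,
    fun s => by simp, rfl⟩⟩

lemma Good.prod {n : ℕ} {ω : Fin n → ℤ} {ι : Type*} (s : Finset ι) {M : ι → ℤ}
    {F F0 : ι → (Fin n → ℝ) → ℂ} (h : ∀ i ∈ s, Good ω (M i) (F i) (F0 i)) :
    Good ω (∑ i ∈ s, M i) (fun η => ∏ i ∈ s, F i η) (fun η => ∏ i ∈ s, F0 i η) := by
  classical
  induction s using Finset.induction_on with
  | empty => simpa using Good.one
  | insert a s ha ih =>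
    simp only [Finset.prod_insert ha, Finset.sum_insert ha]
    exact (h a (by simp)).mul (ih fun i hi => h i (by simp [hi]))

lemma Good.prod0 {n : ℕ} {ω : Fin n → ℤ} {ι : Type*} (s : Finset ι)
    {F F0 : ι → (Fin n → ℝ) → ℂ} (h : ∀ i ∈ s, Good ω 0 (F i) (F0 i)) :
    Good ω 0 (fun η => ∏ i ∈ s, F i η) (fun η => ∏ i ∈ s, F0 i η) := by
  simpa using Good.prod s h

lemma Good.ext {n : ℕ} {ω : Fin n → ℤ} {M M' : ℤ} {F F0 F' F0' : (Fin n → ℝ) → ℂ}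
    (h : Good ω M F F0) (hM : M = M') (hF : ∀ η, F η = F' η) (hF0 : ∀ η, F0 η = F0' η) :
    Good ω M' F' F0' := by
  subst hM
  obtain rfl : F = F' := funext hF
  obtain rfl : F0 = F0' := funext hF0
  exact h

lemma chi_cont {n : ℕ} (N : Fin n → ℤ) : Continuous (chi N) := by
  unfold chi; fun_prop

lemma chi_per {n : ℕ} (N : Fin n → ℤ) : Per n (chi N) := by
  intro ξ k
  unfold chi
  rw [Complex.exp_eq_exp_iff_exists_int]
  refine ⟨-∑ j, N j * k j, ?_⟩
  push_cast
  simp only [mul_add, Finset.sum_add_distrib]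
  simp only [Finset.mul_sum, neg_mul, ← Finset.sum_neg_distrib, Finset.sum_mul]
  congr 1
  exact Finset.sum_congr rfl fun j _ => by ring

lemma chi_norm {n : ℕ} (N : Fin n → ℤ) (η : Fin n → ℝ) : ‖chi N η‖ = 1 := by
  unfold chi
  have : -I * ∑ j, (N j : ℂ) * (η j : ℂ) = ((-∑ j, (N j : ℝ) * η j : ℝ) : ℂ) * I := by
    push_cast; ring
  rw [this, Complex.norm_exp_ofReal_mul_I]

lemma chi_shift {n : ℕ} (N : Fin n → ℤ) (η : Fin n → ℝ) (ω : Fin n → ℤ) (s : ℝ) :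
    chi N (fun j => η j - s * ω j) = Complex.exp (I * s) ^ (pr N ω) * chi N η := by
  unfold chi pr
  rw [← Complex.exp_int_mul, ← Complex.exp_add]
  congr 1
  push_cast
  simp only [mul_sub, Finset.sum_sub_distrib, Finset.sum_mul]
  rw [add_comm, sub_eq_add_neg]
  congr 1
  simp only [Finset.mul_sum, neg_mul, ← Finset.sum_neg_distrib, neg_neg]
  exact Finset.sum_congr rfl fun j _ => by ring

lemma Good.chi {n : ℕ} (ω N : Fin n → ℤ) : Good ω (pr N ω) (chi N) (chi N) :=
  ⟨chi_cont N, chi_per N, fun η => ⟨fun _ => QB.chi N η, fun _ _ => differentiableAt_const _,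
    fun s => chi_shift N η ω s, rfl⟩⟩

lemma Good.disc {n : ℕ} (ω β : Fin n → ℤ) (h : 0 ≤ pr β ω) {R : ℂ → ℂ} (hR : Disc R) :
    Good ω 0 (fun η => R (QB.chi β η)) (fun η => if pr β ω = 0 then R (QB.chi β η) else R 0) := by
  refine ⟨?_, fun ξ k => by simp only [chi_per β ξ k], fun η => ?_⟩
  · rw [continuous_iff_continuousAt]
    intro η
    exact ContinuousAt.comp (g := R) (hR _ (chi_norm β η).le).continuousAt (chi_cont β).continuousAt
  · obtain ⟨k, hk⟩ := Int.eq_ofNat_of_zero_le h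
    refine ⟨fun q => R (q ^ k * QB.chi β η), fun q hq => ?_, fun s => ?_, ?_⟩
    · refine DifferentiableAt.comp q (g := R) (hR _ ?_) (by fun_prop)
      rw [norm_mul, chi_norm, mul_one, norm_pow]
      exact pow_le_one₀ (norm_nonneg _) hq
    · simp only [chi_shift, hk]; simp
    · rcases Nat.eq_zero_or_pos k with rfl | hk'
      · simp [hk]
      · have : pr β ω ≠ 0 := by omega
        simp [this, hk'.ne']

lemma Good.mean {n : ℕ} {ω : Fin n → ℤ} {M : ℤ} {F F0 : (Fin n → ℝ) → ℂ} (h : Good ω M F F0)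
    (hM : 0 ≤ M) (η : Fin n → ℝ) :
    ∫ s in (0:ℝ)..(2 * Real.pi), F (fun j => η j - s * ω j) =
      (2 * Real.pi : ℝ) • (if M = 0 then F0 η else 0) := by
  obtain ⟨G, g1, g2, g3⟩ := h.2.2 η
  obtain ⟨k, hk⟩ := Int.eq_ofNat_of_zero_le hM
  have h1 : Real.circleAverage (fun q => q ^ k * G q) 0 1 = (fun q => q ^ k * G q) 0 := by
    apply DiffContOnCl.circleAverage
    rw [abs_one]
    refine DifferentiableOn.diffContOnCl fun q hq => ?_
    rw [closure_ball _ one_ne_zero] at hq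
    exact DifferentiableAt.differentiableWithinAt
      (((differentiableAt_id).pow k).mul (g1 q (by simpa using hq)))
  have hval : (fun q => q ^ k * G q) 0 = if M = 0 then F0 η else 0 := by
    rcases Nat.eq_zero_or_pos k with rfl | hk'
    · simp [hk, g3]
    · have : M ≠ 0 := by omega
      simp [this, hk'.ne']
  rw [hval, Real.circleAverage_def] at h1
  rw [← h1, smul_smul, mul_inv_cancel₀ (by positivity), one_smul]
  congr 1
  funext s
  rw [g2, hk]
  simp [circleMap, mul_comm]

/-- the group -/
abbrev Wn (n : ℕ) := Equiv.Perm (Fin n) × (Fin n → Bool)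

/-- integer sign -/
def sg (b : Bool) : ℤ := if b then -1 else 1

/-- real action -/
def actR {n : ℕ} (w : Wn n) (ξ : Fin n → ℝ) : Fin n → ℝ := fun j => (sg (w.2 j) : ℝ) * ξ (w.1 j)

lemma sg_sq (b : Bool) : sg b * sg b = 1 := by cases b <;> simp [sg]

lemma sg_sqR (b : Bool) : (sg b : ℝ) * sg b = 1 := by exact_mod_cast sg_sq b

lemma actR_cont {n : ℕ} (w : Wn n) : Continuous (actR w) := by
  unfold actR; fun_prop

lemma Per.comp_actR {n : ℕ} {F : (Fin n → ℝ) → ℂ} (h : Per n F) (w : Wn n) :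
    Per n (fun ξ => F (actR w ξ)) := by
  intro ξ k
  simp only
  rw [← h (actR w ξ) (fun j => sg (w.2 j) * k (w.1 j))]
  congr 1
  funext j
  simp only [actR]; push_cast; ring

lemma isCompact_box (n : ℕ) : IsCompact (box n) := isCompact_univ_pi fun _ => isCompact_Icc

lemma cont_integrable {n : ℕ} {E : Type*} [NormedAddCommGroup E] {F : (Fin n → ℝ) → E}
    (h : Continuous F) : Integrable F ((volume : Measure (Fin n → ℝ)).restrict (box n)) :=
  (h.continuousOn.integrableOn_compact (isCompact_box n))

lemma Good.integral {n : ℕ} {ω : Fin n → ℤ} {M : ℤ} {F F0 : (Fin n → ℝ) → ℂ} (h : Good ω M F F0)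
    (hM : 0 ≤ M) (w : Wn n) :
    ∫ ξ in box n, F (actR w ξ) = ∫ ξ in box n, if M = 0 then F0 (actR w ξ) else 0 := by
  set v : Fin n → ℝ := fun k => (sg (w.2 (w.1.symm k)) : ℝ) * (ω (w.1.symm k) : ℝ) with hv
  have hp : (0:ℝ) ≤ 2 * Real.pi := by positivity
  have hact : ∀ (ξ : Fin n → ℝ) (s : ℝ), actR w ((fun k => -(s * v k)) + ξ) =
      fun j => actR w ξ j - s * ω j := by
    intro ξ s
    funext j
    simp only [actR, hv, Pi.add_apply, Equiv.symm_apply_apply]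
    linear_combination (-s * ω j) * sg_sqR (w.2 j)
  have h1 : ∀ s : ℝ, ∫ ξ in box n, F (fun j => actR w ξ j - s * ω j) =
      ∫ ξ in box n, F (actR w ξ) := by
    intro s
    rw [← box_translate (h.2.1.comp_actR w) (fun k => -(s * v k))]
    simp only [hact]
  have h2 : ∫ s in (0:ℝ)..(2 * Real.pi), ∫ ξ in box n, F (fun j => actR w ξ j - s * ω j) =
      (2 * Real.pi : ℝ) • ∫ ξ in box n, F (actR w ξ) := by
    simp only [h1]
    simp
  have hsw : ∫ s in (0:ℝ)..(2 * Real.pi), ∫ ξ in box n, F (fun j => actR w ξ j - s * ω j) =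
      ∫ ξ in box n, ∫ s in (0:ℝ)..(2 * Real.pi), F (fun j => actR w ξ j - s * ω j) := by
    simp only [intervalIntegral.integral_of_le hp]
    apply integral_integral_swap
    rw [Measure.prod_restrict]
    have hc : Continuous (Function.uncurry fun (s : ℝ) (ξ : Fin n → ℝ) =>
        F (fun j => actR w ξ j - s * ω j)) := by
      refine h.1.comp ?_
      unfold actR
      fun_prop
    refine (hc.continuousOn.integrableOn_compact
      ((isCompact_Icc (a := (0:ℝ)) (b := 2 * Real.pi)).prod (isCompact_box n))).mono_set ?_
    exact Set.prod_mono Set.Ioc_subset_Icc_self subset_rfl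
  rw [h2] at hsw
  simp only [h.mean hM] at hsw
  rw [integral_smul] at hsw
  exact smul_right_injective ℂ (by positivity : (2 * Real.pi : ℝ) ≠ 0) hsw


/-- product over ordered pairs -/
def pp {ι : Type*} [Fintype ι] [LinearOrder ι] (f : ι → ι → ℂ) : ℂ :=
  ∏ a, ∏ b, if a < b then f a b else 1

section pp
variable {ι : Type*} [Fintype ι] [LinearOrder ι]

lemma pp_mul (f g : ι → ι → ℂ) : pp f * pp g = pp (fun a b => f a b * g a b) := by
  simp only [pp, ← Finset.prod_mul_distrib]
  refine Finset.prod_congr rfl fun a _ => Finset.prod_congr rfl fun b _ => ?_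
  split_ifs <;> simp

lemma pp_inv (f : ι → ι → ℂ) : (pp f)⁻¹ = pp (fun a b => (f a b)⁻¹) := by
  simp only [pp, ← Finset.prod_inv_distrib]
  refine Finset.prod_congr rfl fun a _ => Finset.prod_congr rfl fun b _ => ?_
  split_ifs <;> simp

lemma pp_congr {f g : ι → ι → ℂ} (h : ∀ a b, a < b → f a b = g a b) : pp f = pp g := by
  simp only [pp]
  refine Finset.prod_congr rfl fun a _ => Finset.prod_congr rfl fun b _ => ?_
  split_ifs with hab
  · exact h a b hab
  · rfl

lemma pp_ne_zero {f : ι → ι → ℂ} (h : ∀ a b, a < b → f a b ≠ 0) : pp f ≠ 0 := by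
  simp only [pp]
  refine Finset.prod_ne_zero_iff.2 fun a _ => Finset.prod_ne_zero_iff.2 fun b _ => ?_
  split_ifs with hab
  · exact h a b hab
  · exact one_ne_zero

lemma pp_sym (g : ι → ι → ℂ) (h : ∀ a, g a a = 1) :
    ∏ a, ∏ b, g a b = pp (fun a b => g a b * g b a) := by
  have h1 : ∀ a b, g a b = (if a < b then g a b else 1) * (if b < a then g a b else 1) := by
    intro a b
    rcases lt_trichotomy a b with hab | hab | hab
    · simp [hab, hab.not_gt]
    · subst hab; simp [h]
    · simp [hab, hab.not_gt]
  rw [← pp_mul]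
  calc ∏ a, ∏ b, g a b = (∏ a, ∏ b, if a < b then g a b else 1) *
        (∏ a, ∏ b, if b < a then g a b else 1) := by
        simp only [← Finset.prod_mul_distrib]
        exact Finset.prod_congr rfl fun a _ => Finset.prod_congr rfl fun b _ => h1 a b
    _ = _ := by
        congr 1
        rw [Finset.prod_comm]; rfl

lemma pp_reorder (σ : Equiv.Perm ι) (f : ι → ι → ℂ) :
    pp (fun j k => f (σ j) (σ k)) =
      pp (fun a b => if σ.symm a < σ.symm b then f a b else f b a) := by
  have h1 : pp (fun j k => f (σ j) (σ k)) =
      ∏ a, ∏ b, if σ.symm a < σ.symm b then f a b else 1 := by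
    unfold pp
    rw [← Equiv.prod_comp σ (fun a => ∏ b, if σ.symm a < σ.symm b then f a b else 1)]
    refine Finset.prod_congr rfl fun a _ => ?_
    rw [← Equiv.prod_comp σ (fun b => if σ.symm (σ a) < σ.symm b then f (σ a) b else 1)]
    simp
  rw [h1, pp_sym _ (by simp)]
  refine pp_congr fun a b hab => ?_
  have hne : σ.symm a ≠ σ.symm b := fun h => hab.ne (σ.symm.injective h)
  rcases lt_or_gt_of_ne hne with h | h
  · simp [h, h.not_gt]
  · simp [h, h.not_gt]

lemma pp_reorder_symm (σ : Equiv.Perm ι) (f : ι → ι → ℂ) (hf : ∀ a b, f a b = f b a) :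
    pp (fun j k => f (σ j) (σ k)) = pp f := by
  rw [pp_reorder]
  refine pp_congr fun a b _ => ?_
  split_ifs
  · rfl
  · exact hf b a

end pp

/-- type D pair factor -/
def Df (t x y : ℂ) : ℂ := ((1 - t * (x * y⁻¹)) * (1 - t * (x * y))) / ((1 - x * y⁻¹) * (1 - x * y))

/-- parameters -/
structure Par where
  t : ℝ
  t0 : ℝ
  t1 : ℝ
  t2 : ℝ
  t3 : ℝ
  ht : |t| < 1
  h0 : |t0| < 1
  h1 : |t1| < 1
  h2 : |t2| < 1
  h3 : |t3| < 1

/-- short numerator -/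
def Np (p : Par) (x : ℂ) : ℂ := (1 - p.t0 * x) * (1 - p.t1 * x) * (1 - p.t2 * x) * (1 - p.t3 * x)

/-- short c-function -/
def c1 (p : Par) (x : ℂ) : ℂ := Np p x / (1 - x ^ 2)

/-- C function in exponential variables -/
def Cz {n : ℕ} (p : Par) (lam : Fin n → ℤ) (z : Fin n → ℂ) : ℂ :=
  pp (fun j k => Df p.t (z j) (z k)) * ∏ j, if 0 < lam j then c1 p (z j) else 1

/-- monomial -/
def mono {n : ℕ} (lam : Fin n → ℤ) (z : Fin n → ℂ) : ℂ := ∏ j, z j ^ (-lam j)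

/-- Delta in exponential variables -/
def Delz {n : ℕ} (p : Par) (z : Fin n → ℂ) : ℂ :=
  pp (fun j k => (Df p.t (z j) (z k))⁻¹) * ∏ j, (c1 p (z j))⁻¹

/-- inversion by a boolean -/
def binv (b : Bool) (x : ℂ) : ℂ := if b then x⁻¹ else x

/-- action in exponential variables -/
def zact {n : ℕ} (w : Wn n) (z : Fin n → ℂ) : Fin n → ℂ := fun j => binv (w.2 j) (z (w.1 j))

/-- exponential variables -/
def ze {n : ℕ} (ξ : Fin n → ℝ) : Fin n → ℂ := fun j => Complex.exp (I * ξ j)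

lemma act_eq {n : ℕ} (w : Wn n) (ξ : Fin n → ℝ) :
    act n w (fun j => (ξ j : ℂ)) = fun j => ((actR w ξ j : ℝ) : ℂ) := by
  funext j
  simp only [act, actR, sg]
  split_ifs <;> simp

lemma ze_actR {n : ℕ} (w : Wn n) (ξ : Fin n → ℝ) : ze (actR w ξ) = zact w (ze ξ) := by
  funext j
  simp only [ze, zact, actR, sg, binv]
  split_ifs
  · rw [← Complex.exp_neg]; congr 1; push_cast; ring
  · congr 1; push_cast; ring

lemma ze_norm {n : ℕ} (ξ : Fin n → ℝ) (j : Fin n) : ‖ze ξ j‖ = 1 := by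
  simp only [ze]; rw [mul_comm, Complex.norm_exp_ofReal_mul_I]

lemma exp_sub_ze (x y : ℝ) : exp (I * ((x:ℂ) - y)) = exp (I * x) * (exp (I * y))⁻¹ := by
  rw [← Complex.exp_neg, ← Complex.exp_add]; congr 1; ring

lemma exp_add_ze (x y : ℝ) : exp (I * ((x:ℂ) + y)) = exp (I * x) * (exp (I * y)) := by
  rw [← Complex.exp_add]; congr 1; ring

lemma exp_two_ze (x : ℝ) : exp (2 * I * (x:ℂ)) = exp (I * x) ^ 2 := by
  rw [← Complex.exp_nat_mul]; congr 1; push_cast; ring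

lemma Cf_eq {n : ℕ} (p : Par) (lam : Fin n → ℤ) (ξ : Fin n → ℝ) :
    Cf n p.t p.t0 p.t1 p.t2 p.t3 lam (fun j => (ξ j : ℂ)) = Cz p lam (ze ξ) := by
  simp only [Cf, Cz, pp, Df, c1, Np, ze, exp_sub_ze, exp_add_ze, exp_two_ze]

lemma Dlt_eq {n : ℕ} (p : Par) (ξ : Fin n → ℝ) :
    Dlt n p.t p.t0 p.t1 p.t2 p.t3 (fun j => (ξ j : ℂ)) = Delz p (ze ξ) := by
  simp only [Dlt, Delz, pp, Df, c1, Np, ze, exp_sub_ze, exp_add_ze, exp_two_ze, inv_div]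

lemma mono_ze {n : ℕ} (lam : Fin n → ℤ) (ξ : Fin n → ℝ) : mono lam (ze ξ) = chi lam ξ := by
  simp only [mono, ze, chi, ← Complex.exp_int_mul, ← Complex.exp_sum, Finset.mul_sum]
  congr 1
  refine Finset.sum_congr rfl fun j _ => ?_
  push_cast; ring

/-- the unnormalized symmetric sum -/
def Az {n : ℕ} (p : Par) (lam : Fin n → ℤ) (z : Fin n → ℂ) : ℂ :=
  ∑ w : Wn n, Cz p lam (zact w z) * mono lam (zact w z)

lemma P_eq {n : ℕ} (p : Par) (lam : Fin n → ℤ) (ξ : Fin n → ℝ) :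
    P n p.t p.t0 p.t1 p.t2 p.t3 lam (fun j => (ξ j : ℂ)) =
      ccf n p.t p.t0 p.t1 p.t2 p.t3 lam * Az p lam (ze ξ) := by
  simp only [P, Az]
  congr 1
  refine Finset.sum_congr rfl fun w _ => ?_
  rw [act_eq, Cf_eq, ze_actR, ← ze_actR, mono_ze]
  rfl

/-- pair weight -/
def Wp (t x y : ℂ) : ℂ := (Df t x y * Df t x⁻¹ y⁻¹)⁻¹

/-- short weight -/
def Ws (p : Par) (x : ℂ) : ℂ := (c1 p x * c1 p x⁻¹)⁻¹

/-- full weight -/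
def Wz {n : ℕ} (p : Par) (z : Fin n → ℂ) : ℂ :=
  pp (fun j k => Wp p.t (z j) (z k)) * ∏ j, Ws p (z j)

lemma Wz_eq {n : ℕ} (p : Par) (z : Fin n → ℂ) :
    Wz p z = Delz p z * Delz p (fun j => (z j)⁻¹) := by
  simp only [Wz, Delz, Wp, Ws, mul_inv, ← pp_mul, Finset.prod_mul_distrib]
  ring

lemma Df_inv_right (t x y : ℂ) : Df t x y⁻¹ = Df t x y := by
  simp only [Df, inv_inv]; ring

lemma Wp_comm (t x y : ℂ) : Wp t x y = Wp t y x := by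
  simp only [Wp, Df_inv_right]
  congr 1
  simp only [Df]
  rw [div_mul_div_comm, div_mul_div_comm]
  congr 1 <;> ring

lemma Wp_binv (t x y : ℂ) (b b' : Bool) : Wp t (binv b x) (binv b' y) = Wp t x y := by
  cases b <;> cases b' <;> simp [binv, Wp, Df_inv_right, mul_comm]

lemma Ws_binv (p : Par) (x : ℂ) (b : Bool) : Ws p (binv b x) = Ws p x := by
  cases b <;> simp [binv, Ws, mul_comm]

lemma Wz_zact {n : ℕ} (p : Par) (w : Wn n) (z : Fin n → ℂ) : Wz p (zact w z) = Wz p z := by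
  simp only [Wz, zact, Wp_binv, Ws_binv]
  rw [pp_reorder_symm w.1 (fun a b => Wp p.t (z a) (z b)) (fun a b => Wp_comm _ _ _),
    Equiv.prod_comp w.1 (fun a => Ws p (z a))]

lemma conj_unit {x : ℂ} (h : ‖x‖ = 1) : (starRingEnd ℂ) x = x⁻¹ := by
  rw [Complex.inv_def, Complex.normSq_eq_norm_sq, h]; simp

lemma conj_Df (t : ℝ) (x y : ℂ) : (starRingEnd ℂ) (Df t x y) =
    Df t ((starRingEnd ℂ) x) ((starRingEnd ℂ) y) := by
  simp [Df]

lemma conj_c1 (p : Par) (x : ℂ) : (starRingEnd ℂ) (c1 p x) = c1 p ((starRingEnd ℂ) x) := by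
  simp [c1, Np]

lemma conj_pp {ι : Type*} [Fintype ι] [LinearOrder ι] (f : ι → ι → ℂ) :
    (starRingEnd ℂ) (pp f) = pp (fun a b => (starRingEnd ℂ) (f a b)) := by
  simp only [pp, map_prod]
  refine Finset.prod_congr rfl fun a _ => Finset.prod_congr rfl fun b _ => ?_
  split_ifs <;> simp

lemma conj_Cz {n : ℕ} (p : Par) (lam : Fin n → ℤ) (z : Fin n → ℂ) :
    (starRingEnd ℂ) (Cz p lam z) = Cz p lam (fun j => (starRingEnd ℂ) (z j)) := by
  simp only [Cz, map_mul, conj_pp, conj_Df, map_prod]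
  congr 1
  refine Finset.prod_congr rfl fun a _ => ?_
  split_ifs
  · exact conj_c1 _ _
  · simp

lemma conj_mono {n : ℕ} (lam : Fin n → ℤ) (z : Fin n → ℂ) :
    (starRingEnd ℂ) (mono lam z) = mono lam (fun j => (starRingEnd ℂ) (z j)) := by
  simp only [mono, map_prod, map_zpow₀]

lemma conj_Delz {n : ℕ} (p : Par) (z : Fin n → ℂ) :
    (starRingEnd ℂ) (Delz p z) = Delz p (fun j => (starRingEnd ℂ) (z j)) := by
  simp only [Delz, map_mul, conj_pp, map_inv₀, conj_Df, map_prod, conj_c1]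

lemma norm_Delz {n : ℕ} (p : Par) (ξ : Fin n → ℝ) :
    ((‖Delz p (ze ξ)‖ ^ 2 : ℝ) : ℂ) = Wz p (ze ξ) := by
  have h : (fun j => (starRingEnd ℂ) (ze ξ j)) = fun j => (ze ξ j)⁻¹ :=
    funext fun j => conj_unit (ze_norm ξ j)
  rw [Wz_eq, ← h, ← conj_Delz, Complex.mul_conj, Complex.normSq_eq_norm_sq]

lemma zact_comp {n : ℕ} (u w : Wn n) (z : Fin n → ℂ) :
    zact u (zact w z) = zact (w.1 * u.1, fun j => xor (u.2 j) (w.2 (u.1 j))) z := by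
  funext j
  simp only [zact, Equiv.Perm.mul_apply]
  cases u.2 j <;> cases w.2 (u.1 j) <;> simp [binv]

lemma zact_exists {n : ℕ} (w w' : Wn n) : ∃ v : Wn n, ∀ z : Fin n → ℂ,
    (fun j => (zact w' z j)⁻¹) = zact v (zact w z) := by
  refine ⟨(w.1⁻¹ * w'.1, fun j => !(xor (w'.2 j) (w.2 ((w.1⁻¹ * w'.1) j)))), fun z => ?_⟩
  rw [zact_comp]
  funext j
  simp only [zact, mul_inv_cancel_left]
  cases w'.2 j <;> cases w.2 ((w.1⁻¹ * w'.1) j) <;> simp [binv]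


lemma one_sub_ne {t : ℝ} (ht : |t| < 1) {x : ℂ} (hx : ‖x‖ ≤ 1) : 1 - (t : ℂ) * x ≠ 0 := by
  intro h
  have h1 : (t : ℂ) * x = 1 := (sub_eq_zero.1 h).symm
  have h2 : ‖(t : ℂ) * x‖ = 1 := by rw [h1]; simp
  rw [norm_mul, Complex.norm_real, Real.norm_eq_abs] at h2
  nlinarith [abs_nonneg t, norm_nonneg x]

lemma Np_ne (p : Par) {x : ℂ} (hx : ‖x‖ ≤ 1) : Np p x ≠ 0 := by
  unfold Np
  exact mul_ne_zero (mul_ne_zero (mul_ne_zero (one_sub_ne p.h0 hx) (one_sub_ne p.h1 hx))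
    (one_sub_ne p.h2 hx)) (one_sub_ne p.h3 hx)

lemma Np_diff (p : Par) : Differentiable ℂ (Np p) := by unfold Np; fun_prop

/-- inverse short factor -/
def R1 (p : Par) (q : ℂ) : ℂ := (1 - q ^ 2) / Np p q

/-- reflection short factor -/
def R2 (p : Par) (q : ℂ) : ℂ := -((q - p.t0) * (q - p.t1) * (q - p.t2) * (q - p.t3)) / Np p q

/-- reflection pair factor -/
def Uf (t : ℝ) (q : ℂ) : ℂ := (t - q) / (1 - t * q)

/-- inverse pair factor -/
def Dm (t : ℝ) (q : ℂ) : ℂ := (1 - q) / (1 - t * q)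

lemma disc_R1 (p : Par) : Disc (R1 p) := fun q hq => by
  unfold R1
  exact DifferentiableAt.div (by fun_prop) (Np_diff p q) (Np_ne p hq)

lemma disc_R2 (p : Par) : Disc (R2 p) := fun q hq => by
  unfold R2
  exact DifferentiableAt.div (by fun_prop) (Np_diff p q) (Np_ne p hq)

lemma disc_Uf {t : ℝ} (ht : |t| < 1) : Disc (Uf t) := fun q hq => by
  unfold Uf
  exact DifferentiableAt.div (by fun_prop) (by fun_prop) (one_sub_ne ht hq)

lemma disc_Dm {t : ℝ} (ht : |t| < 1) : Disc (Dm t) := fun q hq => by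
  unfold Dm
  exact DifferentiableAt.div (by fun_prop) (by fun_prop) (one_sub_ne ht hq)

lemma disc_one : Disc (fun _ => 1) := fun _ _ => differentiableAt_const _

lemma c1_inv (p : Par) (q : ℂ) : (c1 p q)⁻¹ = R1 p q := by
  simp [c1, R1]

lemma short_pos (p : Par) {q : ℂ} (h0 : q ≠ 0) (h1 : q ^ 2 ≠ 1) :
    c1 p q⁻¹ * (c1 p q)⁻¹ = q ^ (-2 : ℤ) * R2 p q := by
  have h2 : q ^ 2 - 1 ≠ 0 := sub_ne_zero.2 h1
  have e1 : c1 p q⁻¹ = q ^ (-2 : ℤ) * ((q - p.t0) * (q - p.t1) * (q - p.t2) * (q - p.t3)) / (q ^ 2 - 1) := by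
    have h3 : 1 - q⁻¹ ^ 2 = (q ^ 2 - 1) / q ^ 2 := by field_simp
    have e2 : q ^ (-2 : ℤ) = (q ^ 2)⁻¹ := by rw [zpow_neg]; norm_cast
    unfold c1 Np
    rw [h3, e2]
    field_simp
  rw [e1, c1_inv]
  unfold R1 R2
  rw [show (1 - q ^ 2) = -(q ^ 2 - 1) by ring]
  field_simp

/-- genericity in exponential variables -/
def Gen {n : ℕ} (z : Fin n → ℂ) : Prop :=
  (∀ a b, a ≠ b → z a ≠ z b ∧ z a * z b ≠ 1) ∧ ∀ a, z a ^ 2 ≠ 1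

lemma binv_ne {x : ℂ} (hx : x ≠ 0) (b : Bool) : binv b x ≠ 0 := by
  cases b <;> simp [binv, hx]

lemma Gen.zact {n : ℕ} {z : Fin n → ℂ} (hz : ∀ j, z j ≠ 0) (h : Gen z) (w : Wn n) :
    Gen (zact w z) := by
  constructor
  · intro a b hab
    have hab' : w.1 a ≠ w.1 b := fun h => hab (w.1.injective h)
    obtain ⟨h1, h2⟩ := h.1 _ _ hab'
    have za := hz (w.1 a)
    have zb := hz (w.1 b)
    unfold QB.zact
    generalize z (w.1 a) = x at *
    generalize z (w.1 b) = y at *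
    constructor
    · intro hh
      cases hA : w.2 a <;> cases hB : w.2 b <;> simp only [hA, hB, binv] at hh <;> simp at hh
      · exact h1 hh
      · exact h2 (by rw [hh]; exact inv_mul_cancel₀ zb)
      · exact h2 (by rw [← hh]; exact mul_inv_cancel₀ za)
      · exact h1 hh
    · intro hh
      cases hA : w.2 a <;> cases hB : w.2 b <;> simp only [hA, hB, binv] at hh <;> simp at hh
      · exact h2 hh
      · exact h1 (by field_simp at hh; exact hh)
      · exact h1 (by field_simp at hh; exact hh.symm)
      · exact h2 (by field_simp at hh; exact hh.symm)
  · intro a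
    have h1 := h.2 (w.1 a)
    unfold QB.zact
    cases w.2 a <;> simp [binv]
    · simpa using h1
    · simpa using h1

/-- general torus integrand -/
def Fg {n : ℕ} (N : Fin n → ℤ) (Rs Rt : Fin n → ℂ → ℂ) (Rm Rp Qm Qp : Fin n → Fin n → ℂ → ℂ)
    (η : Fin n → ℝ) : ℂ :=
  chi N η * (∏ a, (Rs a (chi (Pi.single a 1) η) * Rt a (chi (-Pi.single a 1) η))) *
  pp (fun a b => (Rm a b (chi (Pi.single a 1 - Pi.single b 1) η) *
    Rp a b (chi (Pi.single a 1 + Pi.single b 1) η)) *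
    (Qm a b (chi (-(Pi.single a 1 - Pi.single b 1)) η) *
    Qp a b (chi (-(Pi.single a 1 + Pi.single b 1)) η)))

/-- constant term of the general integrand -/
def Fg0 {n : ℕ} (ω : Fin n → ℤ) (N : Fin n → ℤ) (Rs Rt : Fin n → ℂ → ℂ)
    (Rm Rp Qm Qp : Fin n → Fin n → ℂ → ℂ)
    (η : Fin n → ℝ) : ℂ :=
  chi N η * (∏ a, ((if ω a = 0 then Rs a (chi (Pi.single a 1) η) else Rs a 0) *
    Rt a (chi (-Pi.single a 1) η))) *
  pp (fun a b => ((if ω a - ω b = 0 then Rm a b (chi (Pi.single a 1 - Pi.single b 1) η)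
      else Rm a b 0) *
    (if ω a + ω b = 0 then Rp a b (chi (Pi.single a 1 + Pi.single b 1) η) else Rp a b 0)) *
    (Qm a b (chi (-(Pi.single a 1 - Pi.single b 1)) η) *
    Qp a b (chi (-(Pi.single a 1 + Pi.single b 1)) η)))

lemma pr_single {n : ℕ} (ω : Fin n → ℤ) (a : Fin n) : pr (Pi.single a 1) ω = ω a := by
  simp [pr, Pi.single_apply]

lemma pr_add {n : ℕ} (ω N N' : Fin n → ℤ) : pr (N + N') ω = pr N ω + pr N' ω := by
  simp [pr, add_mul, Finset.sum_add_distrib]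

lemma pr_sub {n : ℕ} (ω N N' : Fin n → ℤ) : pr (N - N') ω = pr N ω - pr N' ω := by
  simp [pr, sub_mul, Finset.sum_sub_distrib]

lemma pr_neg {n : ℕ} (ω N : Fin n → ℤ) : pr (-N) ω = - pr N ω := by
  simp [pr]

lemma Good.const {n : ℕ} (ω β : Fin n → ℤ) {R : ℂ → ℂ} (hR : Disc R)
    (h : pr β ω ≠ 0 → R = fun _ => 1) :
    Good ω 0 (fun η => R (QB.chi β η)) (fun η => R (QB.chi β η)) := by
  by_cases h0 : pr β ω = 0
  · refine (Good.disc ω β h0.ge hR).ext rfl (fun _ => rfl) fun η => by simp [h0]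
  · rw [h h0]; exact Good.one

lemma Good.pp {n : ℕ} {ω : Fin n → ℤ} {F F0 : Fin n → Fin n → (Fin n → ℝ) → ℂ}
    (h : ∀ a b, a < b → Good ω 0 (F a b) (F0 a b)) :
    Good ω 0 (fun η => QB.pp (fun a b => F a b η)) (fun η => QB.pp (fun a b => F0 a b η)) := by
  refine Good.prod0 _ fun a _ => Good.prod0 (F := fun b η => if a < b then F a b η else 1)
    (F0 := fun b η => if a < b then F0 a b η else 1) _ fun b _ => ?_
  by_cases hab : a < b
  · simpa [hab] using h a b hab
  · simpa [hab] using Good.one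

lemma Fg_good {n : ℕ} {ω N : Fin n → ℤ} {Rs Rt : Fin n → ℂ → ℂ}
    {Rm Rp Qm Qp : Fin n → Fin n → ℂ → ℂ}
    (hω : ∀ a, 0 ≤ ω a) (hanti : ∀ a b, a ≤ b → ω b ≤ ω a)
    (hRs : ∀ a, Disc (Rs a)) (hRt : ∀ a, Disc (Rt a))
    (hRm : ∀ a b, Disc (Rm a b)) (hRp : ∀ a b, Disc (Rp a b))
    (hQm : ∀ a b, Disc (Qm a b)) (hQp : ∀ a b, Disc (Qp a b))
    (hRt1 : ∀ a, ω a ≠ 0 → Rt a = fun _ => 1)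
    (hQm1 : ∀ a b, ω a ≠ 0 → Qm a b = fun _ => 1)
    (hQp1 : ∀ a b, ω a ≠ 0 → Qp a b = fun _ => 1) :
    Good ω (pr N ω) (Fg N Rs Rt Rm Rp Qm Qp) (Fg0 ω N Rs Rt Rm Rp Qm Qp) := by
  have h1 := Good.chi ω N
  have h2 := Good.prod0 (ω := ω) univ (fun a (_ : a ∈ univ) =>
    (Good.disc ω (Pi.single a 1) (by rw [pr_single]; exact hω a) (hRs a)).mul
    (Good.const ω (-Pi.single a 1) (hRt a) (fun h => hRt1 a (by
      rwa [pr_neg, pr_single, neg_ne_zero] at h))))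
  have h3 := Good.pp (ω := ω) (fun a b (hab : a < b) =>
    ((Good.disc ω (Pi.single a 1 - Pi.single b 1) (by
        rw [pr_sub, pr_single, pr_single]; have := hanti a b hab.le; omega) (hRm a b)).mul
     (Good.disc ω (Pi.single a 1 + Pi.single b 1) (by
        rw [pr_add, pr_single, pr_single]; have := hω a; have := hω b; omega) (hRp a b))).mul
    ((Good.const ω (-(Pi.single a 1 - Pi.single b 1)) (hQm a b) (fun h => hQm1 a b (by
      rw [pr_neg, pr_sub, pr_single, pr_single] at h
      have := hanti a b hab.le; have := hω b; omega))).mul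
     (Good.const ω (-(Pi.single a 1 + Pi.single b 1)) (hQp a b) (fun h => hQp1 a b (by
      rw [pr_neg, pr_add, pr_single, pr_single] at h
      have := hanti a b hab.le; have := hω b; omega)))))
  refine ((h1.mul h2).mul h3).ext (by ring) (fun η => rfl) (fun η => ?_)
  simp only [Fg0, pr_single, pr_sub, pr_add]

lemma chi_add {n : ℕ} (N N' : Fin n → ℤ) (η : Fin n → ℝ) : chi (N + N') η = chi N η * chi N' η := by
  simp only [chi, ← Complex.exp_add]
  congr 1
  simp [add_mul, Finset.sum_add_distrib]; ring

lemma chi_neg {n : ℕ} (N : Fin n → ℤ) (η : Fin n → ℝ) : chi (-N) η = (chi N η)⁻¹ := by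
  simp only [chi, ← Complex.exp_neg]
  congr 1
  simp

lemma chi_sub {n : ℕ} (N N' : Fin n → ℤ) (η : Fin n → ℝ) :
    chi (N - N') η = chi N η * (chi N' η)⁻¹ := by
  rw [sub_eq_add_neg, chi_add, chi_neg]

lemma chi_single {n : ℕ} (a : Fin n) (η : Fin n → ℝ) : chi (Pi.single a 1) η = (ze η a)⁻¹ := by
  simp only [chi, ze, ← Complex.exp_neg]
  congr 1
  simp [Pi.single_apply]

lemma chi_eq {n : ℕ} (N : Fin n → ℤ) (η : Fin n → ℝ) : chi N η = ∏ a, ((ze η a)⁻¹) ^ (N a) := by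
  rw [← mono_ze]
  simp [mono]

lemma ze_ne {n : ℕ} (ξ : Fin n → ℝ) (j : Fin n) : ze ξ j ≠ 0 := Complex.exp_ne_zero _

/-- `Fg` in exponential variables -/
lemma Fg_ze {n : ℕ} (N : Fin n → ℤ) (Rs Rt : Fin n → ℂ → ℂ) (Rm Rp Qm Qp : Fin n → Fin n → ℂ → ℂ)
    (η : Fin n → ℝ) : Fg N Rs Rt Rm Rp Qm Qp η =
    (∏ a, (((ze η a)⁻¹) ^ (N a) * (Rs a (ze η a)⁻¹ * Rt a (ze η a)))) *
    pp (fun a b => (Rm a b ((ze η a)⁻¹ * ze η b) * Rp a b ((ze η a)⁻¹ * (ze η b)⁻¹)) *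
      (Qm a b (ze η a * (ze η b)⁻¹) * Qp a b (ze η a * ze η b))) := by
  unfold Fg
  simp only [chi_neg, chi_sub, chi_add, chi_single, inv_inv, chi_eq N, ← Finset.prod_mul_distrib,
    mul_inv]


section pairs
variable {t : ℝ} (ht : |t| < 1) {x y : ℂ}

lemma Df_inv_eq {t : ℝ} {x y : ℂ} :
    (Df t x⁻¹ y⁻¹)⁻¹ = Dm t (x⁻¹ * y) * Dm t (x⁻¹ * y⁻¹) := by
  simp only [Df, Dm, inv_inv, inv_div]
  rw [div_mul_div_comm]

lemma Df_eq_inv {t : ℝ} {x y : ℂ} :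
    (Df t x y)⁻¹ = Dm t (x * y⁻¹) * Dm t (x * y) := by
  simp only [Df, Dm, inv_div]
  rw [div_mul_div_comm]

/-- the reduction of one linear factor -/
lemma lin_ratio {t : ℝ} {r : ℂ} (hr : r ≠ 0) (hr1 : r ≠ 1) :
    (1 - t * r⁻¹) / (1 - r⁻¹) * Dm t r = Uf t r := by
  have h1 : r - 1 ≠ 0 := sub_ne_zero.2 hr1
  have e : (1 - t * r⁻¹) / (1 - r⁻¹) = (r - t) / (r - 1) := by
    rw [show 1 - t * r⁻¹ = (r - t) / r by field_simp, show 1 - r⁻¹ = (r - 1) / r by field_simp]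
    field_simp
  rw [e, Dm, Uf, div_mul_div_comm, show (1 - r) = -(r - 1) by ring]
  rw [show (r - ↑t) * -(r - 1) = (t - r) * (r - 1) by ring, mul_comm (r - 1)]
  exact mul_div_mul_right _ _ h1

lemma lin_ratio1 {t : ℝ} (ht : |t| < 1) {r : ℂ} (hr : ‖r‖ = 1) (hr1 : r ≠ 1) :
    (1 - t * r) / (1 - r) * Dm t r = 1 := by
  have h1 : 1 - r ≠ 0 := sub_ne_zero.2 hr1.symm
  have h2 := one_sub_ne ht hr.le
  unfold Dm
  field_simp

lemma Df_split {t : ℂ} (x y : ℂ) :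
    Df t x y = (1 - t * (x * y⁻¹)) / (1 - x * y⁻¹) * ((1 - t * (x * y)) / (1 - x * y)) := by
  rw [Df, div_mul_div_comm]

end pairs

lemma Wp_eq {t x y : ℂ} (h : Df t x y ≠ 0) : Df t x y * Wp t x y = (Df t x⁻¹ y⁻¹)⁻¹ := by
  rw [Wp, mul_inv, mul_inv_cancel_left₀ h]

lemma Df_ne {t : ℝ} (ht : |t| < 1) {x y : ℂ} (hx : ‖x‖ = 1) (hy : ‖y‖ = 1) (h1 : x ≠ y)
    (h2 : x * y ≠ 1) : Df t x y ≠ 0 := by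
  have hy0 : y ≠ 0 := by rintro rfl; simp at hy
  have h3 : x * y⁻¹ ≠ 1 := fun h => h1 (by
    have := congrArg (· * y) h
    simpa [mul_assoc, inv_mul_cancel₀ hy0] using this)
  rw [Df]
  refine div_ne_zero (mul_ne_zero (one_sub_ne ht (by simp [hx, hy])) (one_sub_ne ht (by simp [hx, hy])))
    (mul_ne_zero (sub_ne_zero.2 h3.symm) (sub_ne_zero.2 h2.symm))

/-- exponent of the orthogonality integrand; `s = true` means inverted -/
def No (l m : ℤ) (s : Bool) : ℤ := if 0 < m then (if s then l - m else l + m - 2) else l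

/-- short factor -/
def Rso (p : Par) (m : ℤ) (s : Bool) : ℂ → ℂ :=
  if 0 < m then (if s then fun _ => 1 else R2 p) else R1 p

/-- pair factors -/
def Rmo (t : ℝ) (first sa sb : Bool) : ℂ → ℂ :=
  if first then (if sa then fun _ => 1 else Uf t) else (if sb then Uf t else fun _ => 1)

/-- pair factors -/
def Rpo (t : ℝ) (first sa sb : Bool) : ℂ → ℂ :=
  if first then (if sa then fun _ => 1 else Uf t) else (if sb then fun _ => 1 else Uf t)

lemma pair_orth {t : ℝ} (ht : |t| < 1) {x y : ℂ} (hx : ‖x‖ = 1) (hy : ‖y‖ = 1) (h1 : x ≠ y)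
    (h2 : x * y ≠ 1) (first sa sb : Bool) :
    Df t x y * (if first then Df t (binv sa x) (binv sb y) else Df t (binv sb y) (binv sa x)) *
      Wp t x y = Rmo t first sa sb (x⁻¹ * y) * Rpo t first sa sb (x⁻¹ * y⁻¹) := by
  have hy0 : y ≠ 0 := by rintro rfl; simp at hy
  have hx0 : x ≠ 0 := by rintro rfl; simp at hx
  have hr : x⁻¹ * y ≠ 1 := fun h => h1 (by field_simp at h; exact h.symm)
  have hp : x⁻¹ * y⁻¹ ≠ 1 := fun h => h2 (by field_simp at h; exact h.symm)
  have hrn : ‖x⁻¹ * y‖ = 1 := by simp [hx, hy]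
  have hpn : ‖x⁻¹ * y⁻¹‖ = 1 := by simp [hx, hy]
  have hr0 : x⁻¹ * y ≠ 0 := by positivity
  have hp0 : x⁻¹ * y⁻¹ ≠ 0 := by positivity
  rw [mul_right_comm, Wp_eq (Df_ne ht hx hy h1 h2), Df_inv_eq]
  have e1 := lin_ratio (t := t) hr0 hr
  have e2 := lin_ratio (t := t) hp0 hp
  have e3 := lin_ratio1 ht hrn hr
  have e4 := lin_ratio1 ht hpn hp
  have b1 : ∀ (b : Bool) (u v : ℂ), Df t u (binv b v) = Df t u v := by
    intro b u v; cases b <;> simp [binv, Df_inv_right]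
  simp only [b1]
  have i1 : (x⁻¹ * y)⁻¹ = x * y⁻¹ := by rw [mul_inv, inv_inv]
  have i2 : (x⁻¹ * y⁻¹)⁻¹ = x * y := by rw [mul_inv, inv_inv, inv_inv]
  rw [i1] at e1
  rw [i2] at e2
  cases first
  · cases sb
    · simp only [binv, Rmo, Rpo, Bool.false_eq_true, if_false]
      rw [Df_split, ← e2, mul_comm y x⁻¹, mul_comm y x]
      linear_combination ((1 - ↑t * (x * y)) / (1 - x * y)) * Dm t (x⁻¹ * y⁻¹) * e3
    · simp only [binv, Rmo, Rpo, Bool.false_eq_true, if_false, if_true]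
      rw [Df_split, ← e1, mul_comm y⁻¹ x⁻¹, mul_comm y⁻¹ x]
      linear_combination ((1 - ↑t * (x * y⁻¹)) / (1 - x * y⁻¹)) * Dm t (x⁻¹ * y) * e4
  · cases sa
    · simp only [binv, Rmo, Rpo, Bool.false_eq_true, if_false, if_true]
      rw [Df_split, ← e1, ← e2]
      ring
    · simp only [binv, Rmo, Rpo, if_true]
      rw [Df_split]
      linear_combination ((1 - ↑t * (x⁻¹ * y⁻¹)) / (1 - x⁻¹ * y⁻¹)) * Dm t (x⁻¹ * y⁻¹) * e3 + e4

lemma c1_ne (p : Par) {x : ℂ} (hx : ‖x‖ = 1) (h : x ^ 2 ≠ 1) : c1 p x ≠ 0 := by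
  rw [c1]
  exact div_ne_zero (Np_ne p hx.le) (sub_ne_zero.2 h.symm)

lemma short_orth (p : Par) {x : ℂ} (hx : ‖x‖ = 1) (h : x ^ 2 ≠ 1) (l m : ℤ) (s : Bool) (hl : 0 ≤ l)
    (hm : 0 ≤ m) :
    ((if 0 < l then c1 p x else 1) * x ^ (-l)) *
     ((if 0 < m then c1 p (binv s x) else 1) * (binv s x) ^ (-m)) * Ws p x =
    (x⁻¹) ^ (No l m s) * (Rso p m s x⁻¹ * (if 0 < l then (fun _ => 1) else R1 p : ℂ → ℂ) x) := by
  have hx0 : x ≠ 0 := by rintro rfl; simp at hx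
  have hq0 : x⁻¹ ≠ 0 := inv_ne_zero hx0
  have hqn : ‖x⁻¹‖ = 1 := by simp [hx]
  have hq2 : x⁻¹ ^ 2 ≠ 1 := by rw [inv_pow]; simpa using h
  have c1x := c1_ne p hx h
  have c1q := c1_ne p hqn hq2
  have e1 : (if 0 < l then c1 p x else 1) * Ws p x =
      (c1 p x⁻¹)⁻¹ * (if 0 < l then (fun _ => 1) else R1 p : ℂ → ℂ) x := by
    rw [Ws, mul_inv]
    split_ifs
    · field_simp
    · rw [c1_inv p x]; ring
  have e2 : ((if 0 < m then c1 p (binv s x) else 1) * (binv s x) ^ (-m)) * (c1 p x⁻¹)⁻¹ * x ^ (-l) =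
      (x⁻¹) ^ (No l m s) * Rso p m s x⁻¹ := by
    have e3 : x ^ (-l) = x⁻¹ ^ l := by simp
    rw [e3]
    unfold No Rso
    by_cases hm0 : 0 < m
    · cases s
      · have e4 : x ^ (-m) = x⁻¹ ^ m := by simp
        simp only [hm0, if_true, binv, Bool.false_eq_true, if_false]
        have := short_pos p hq0 hq2
        rw [inv_inv] at this
        rw [mul_right_comm (c1 p x), this, e4, show l + m - 2 = -2 + m + l by ring, zpow_add₀ hq0, zpow_add₀ hq0]
        ring
      · simp only [hm0, if_true, binv]
        rw [sub_eq_add_neg, zpow_add₀ hq0]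
        linear_combination (x⁻¹ ^ (-m)) * x⁻¹ ^ l * mul_inv_cancel₀ c1q
    · have : m = 0 := by omega
      subst this
      simp [c1_inv, mul_comm]
  rw [← mul_assoc (x⁻¹ ^ _), ← e2]
  linear_combination ((if 0 < m then c1 p (binv s x) else 1) * (binv s x) ^ (-m)) * x ^ (-l) * e1

/-- the orthogonality integrand -/
lemma term_eq {n : ℕ} (p : Par) (lam mu : Fin n → ℤ) (hl : ∀ a, 0 ≤ lam a) (hm : ∀ a, 0 ≤ mu a)
    (v : Wn n) (η : Fin n → ℝ) (hg : Gen (ze η)) :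
    (Cz p lam (ze η) * mono lam (ze η)) * (Cz p mu (zact v (ze η)) * mono mu (zact v (ze η))) *
      Wz p (ze η) =
    Fg (fun a => No (lam a) (mu (v.1.symm a)) (v.2 (v.1.symm a)))
      (fun a => Rso p (mu (v.1.symm a)) (v.2 (v.1.symm a)))
      (fun a => if 0 < lam a then (fun _ => 1) else R1 p)
      (fun a b => Rmo p.t (decide (v.1.symm a < v.1.symm b)) (v.2 (v.1.symm a)) (v.2 (v.1.symm b)))
      (fun a b => Rpo p.t (decide (v.1.symm a < v.1.symm b)) (v.2 (v.1.symm a)) (v.2 (v.1.symm b)))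
      (fun _ _ _ => 1) (fun _ _ _ => 1) η := by
  rw [Fg_ze]
  have hz := ze_norm η
  generalize ze η = z at *
  have e1 : pp (fun j k => Df p.t (zact v z j) (zact v z k)) =
      pp (fun a b => if decide (v.1.symm a < v.1.symm b) = true then
        Df p.t (binv (v.2 (v.1.symm a)) (z a)) (binv (v.2 (v.1.symm b)) (z b)) else
        Df p.t (binv (v.2 (v.1.symm b)) (z b)) (binv (v.2 (v.1.symm a)) (z a))) := by
    simp only [decide_eq_true_eq]
    rw [← pp_reorder v.1 (fun a b => Df p.t (binv (v.2 (v.1.symm a)) (z a)) (binv (v.2 (v.1.symm b)) (z b)))]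
    simp only [Equiv.symm_apply_apply]
    rfl
  have e2 : (∏ j, if 0 < mu j then c1 p (zact v z j) else 1) * mono mu (zact v z) =
      ∏ a, ((if 0 < mu (v.1.symm a) then c1 p (binv (v.2 (v.1.symm a)) (z a)) else 1) *
        (binv (v.2 (v.1.symm a)) (z a)) ^ (-mu (v.1.symm a))) := by
    rw [← Equiv.prod_comp v.1 (fun a =>
      ((if 0 < mu (v.1.symm a) then c1 p (binv (v.2 (v.1.symm a)) (z a)) else 1) *
        (binv (v.2 (v.1.symm a)) (z a)) ^ (-mu (v.1.symm a))))]
    simp only [Equiv.symm_apply_apply, mono, zact, Finset.prod_mul_distrib]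
  have e3 : (∏ j, if 0 < lam j then c1 p (z j) else 1) * mono lam z =
      ∏ a, ((if 0 < lam a then c1 p (z a) else 1) * (z a) ^ (-lam a)) := by
    simp only [mono, Finset.prod_mul_distrib]
  unfold Cz Wz
  have e4 : ∀ A B C D E F G H : ℂ, A * B * C * (D * E * F) * (G * H) =
    ((B * C) * (E * F) * H) * (A * D * G) := by intros; ring
  rw [e4, e1, e2, e3, ← Finset.prod_mul_distrib, ← Finset.prod_mul_distrib, pp_mul, pp_mul]
  congr 1
  · refine Finset.prod_congr rfl fun a _ => ?_
    exact short_orth p (hz a) (hg.2 a) _ _ _ (hl a) (hm _)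
  · refine pp_congr fun a b hab => ?_
    obtain ⟨h1, h2⟩ := hg.1 a b hab.ne
    rw [mul_one, mul_one, ← pair_orth p.ht (hz a) (hz b) h1 h2]


lemma chi_ne_one_ae {n : ℕ} (N : Fin n → ℤ) (hN : N ≠ 0) :
    ∀ᵐ ξ : Fin n → ℝ, chi N ξ ≠ 1 := by
  obtain ⟨i, hi⟩ := Function.ne_iff.1 hN
  let L : (Fin n → ℝ) →ₗ[ℝ] ℝ := ∑ j, (N j : ℝ) • LinearMap.proj j
  have hL : ∀ ξ, L ξ = ∑ j, (N j : ℝ) * ξ j := by intro ξ; simp [L]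
  have hs : Function.Surjective L := by
    intro c
    refine ⟨Pi.single i (c / N i), ?_⟩
    have : (N i : ℝ) ≠ 0 := by exact_mod_cast hi
    rw [hL, Finset.sum_eq_single i]
    · simp; field_simp
    · intro b _ hb; simp [hb]
    · simp
  obtain ⟨c, _, hc⟩ := L.exists_map_addHaar_eq_smul_addHaar
    (volume : Measure (Fin n → ℝ)) (volume : Measure ℝ) hs
  set S : Set ℝ := Set.range (fun k : ℤ => (k : ℝ) * (2 * Real.pi)) with hS
  have hSc : S.Countable := Set.countable_range _
  have hmeas : Measurable L := (LinearMap.continuous_of_finiteDimensional L).measurable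
  have h0 : (volume : Measure (Fin n → ℝ)) (L ⁻¹' S) = 0 := by
    rw [← Measure.map_apply hmeas hSc.measurableSet, hc]
    simp [hSc.measure_zero]
  refine measure_mono_null ?_ h0
  intro ξ hξ
  simp only [Set.mem_compl_iff, Set.mem_ofPred_eq, not_not] at hξ
  rw [chi, Complex.exp_eq_one_iff] at hξ
  obtain ⟨k, hk⟩ := hξ
  refine ⟨-k, ?_⟩
  have h1 : ((∑ j, (N j : ℝ) * ξ j : ℝ) : ℂ) = ((-k * (2 * Real.pi) : ℝ) : ℂ) := by
    push_cast
    have := congrArg (fun x => I * x) hk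
    have hI := Complex.I_mul_I
    linear_combination this + ((∑ j, (N j : ℂ) * (ξ j : ℂ)) + k * (2 * Real.pi)) * hI
  have h2 := Complex.ofReal_injective h1
  rw [hL, h2]; push_cast; ring

lemma gen_ae (n : ℕ) : ∀ᵐ ξ : Fin n → ℝ, Gen (ze ξ) := by
  have h1 : ∀ a b : Fin n, a ≠ b → ∀ᵐ ξ : Fin n → ℝ,
      chi (Pi.single a 1 - Pi.single b 1) ξ ≠ 1 ∧ chi (Pi.single a 1 + Pi.single b 1) ξ ≠ 1 := by
    intro a b hab
    refine (chi_ne_one_ae _ ?_).and (chi_ne_one_ae _ ?_)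
    · intro h; have := congrFun h a; simp [hab] at this
    · intro h; have := congrFun h a; simp [hab] at this
  have h2 : ∀ a : Fin n, ∀ᵐ ξ : Fin n → ℝ, chi (Pi.single a 1 + Pi.single a 1) ξ ≠ 1 := by
    intro a
    refine chi_ne_one_ae _ ?_
    intro h; have := congrFun h a; simp at this
  have h1' : ∀ᵐ ξ : Fin n → ℝ, ∀ a b : Fin n, a ≠ b →
      chi (Pi.single a 1 - Pi.single b 1) ξ ≠ 1 ∧ chi (Pi.single a 1 + Pi.single b 1) ξ ≠ 1 := by
    rw [ae_all_iff]; intro a; rw [ae_all_iff]; intro b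
    by_cases hab : a = b
    · simp [hab]
    · filter_upwards [h1 a b hab] with ξ h _ using h
  have h2' := ae_all_iff.2 h2
  filter_upwards [h1', h2'] with ξ g1 g2
  refine ⟨fun a b hab => ⟨fun h => (g1 a b hab).1 ?_, fun h => (g1 a b hab).2 ?_⟩, fun a h => g2 a ?_⟩
  · rw [chi_sub, chi_single, chi_single, h, inv_inv, inv_mul_cancel₀ (ze_ne _ _)]
  · rw [chi_add, chi_single, chi_single, ← mul_inv, h, inv_one]
  · rw [chi_add, chi_single, ← mul_inv, ← sq, h, inv_one]

lemma gen_ae_box (n : ℕ) : ∀ᵐ ξ ∂((volume : Measure (Fin n → ℝ)).restrict (box n)), Gen (ze ξ) :=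
  ae_restrict_of_ae (gen_ae n)

lemma Delz_norm_zact {n : ℕ} (p : Par) (w : Wn n) (ξ : Fin n → ℝ) :
    ‖Delz p (zact w (ze ξ))‖ = ‖Delz p (ze ξ)‖ := by
  have h1 := norm_Delz p (actR w ξ)
  rw [ze_actR, Wz_zact, ← norm_Delz p ξ] at h1
  have h2 := Complex.ofReal_injective h1
  exact (sq_eq_sq₀ (norm_nonneg _) (norm_nonneg _)).1 h2

lemma Cz_Delz {n : ℕ} (p : Par) (lam : Fin n → ℤ) {z : Fin n → ℂ} (hz : ∀ j, ‖z j‖ = 1)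
    (hg : Gen z) : Cz p lam z * Delz p z = ∏ j, if 0 < lam j then 1 else R1 p (z j) := by
  unfold Cz Delz
  rw [← pp_inv]
  have h1 : pp (fun j k => Df p.t (z j) (z k)) ≠ 0 := pp_ne_zero fun a b hab =>
    Df_ne p.ht (hz a) (hz b) (hg.1 a b hab.ne).1 (hg.1 a b hab.ne).2
  rw [show ∀ A B C : ℂ, A * B * (A⁻¹ * C) = A * A⁻¹ * (B * C) by intros; ring, mul_inv_cancel₀ h1,
    one_mul, ← Finset.prod_mul_distrib]
  refine Finset.prod_congr rfl fun j _ => ?_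
  split_ifs
  · exact mul_inv_cancel₀ (c1_ne p (hz j) (hg.2 j))
  · rw [c1_inv, one_mul]

lemma R1_bound (p : Par) : ∃ K : ℝ, 1 ≤ K ∧ ∀ x : ℂ, ‖x‖ ≤ 1 → ‖R1 p x‖ ≤ K := by
  have hc : ContinuousOn (R1 p) (Metric.closedBall 0 1) := fun x hx =>
    (disc_R1 p x (by simpa using hx)).continuousAt.continuousWithinAt
  obtain ⟨K, hK⟩ := (isCompact_closedBall (0:ℂ) 1).exists_bound_of_continuousOn hc
  exact ⟨max 1 K, le_max_left _ _, fun x hx => (hK x (by simpa using hx)).trans (le_max_right _ _)⟩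

lemma mono_norm {n : ℕ} (lam : Fin n → ℤ) {z : Fin n → ℂ} (hz : ∀ j, ‖z j‖ = 1) :
    ‖mono lam z‖ = 1 := by
  simp [mono, norm_prod, hz]

lemma zact_norm {n : ℕ} (w : Wn n) {z : Fin n → ℂ} (hz : ∀ j, ‖z j‖ = 1) (j : Fin n) :
    ‖zact w z j‖ = 1 := by
  unfold zact
  cases w.2 j <;> simp [binv, hz]

lemma AD_bound {n : ℕ} (p : Par) (lam : Fin n → ℤ) : ∃ B : ℝ, ∀ ξ : Fin n → ℝ, Gen (ze ξ) →
    ‖Az p lam (ze ξ) * Delz p (ze ξ)‖ ≤ B := by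
  obtain ⟨K, hK1, hK⟩ := R1_bound p
  refine ⟨∑ _w : Wn n, K ^ n, fun ξ hg => ?_⟩
  rw [norm_mul, Az]
  refine (mul_le_mul_of_nonneg_right (norm_sum_le _ _) (norm_nonneg _)).trans ?_
  rw [Finset.sum_mul]
  refine Finset.sum_le_sum fun w _ => ?_
  have hzn := zact_norm w (ze_norm ξ)
  rw [norm_mul, mono_norm _ hzn, mul_one, ← Delz_norm_zact p w, ← norm_mul,
    Cz_Delz p lam hzn (hg.zact (ze_ne ξ) w), norm_prod]
  have : ∏ j : Fin n, K = K ^ n := by simp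
  rw [← this]
  refine Finset.prod_le_prod (fun _ _ => norm_nonneg _) fun j _ => ?_
  split_ifs
  · simpa using hK1
  · exact hK _ (hzn j).le

lemma meas_ze {n : ℕ} : Measurable (ze : (Fin n → ℝ) → Fin n → ℂ) := by
  refine Continuous.measurable ?_
  unfold ze; fun_prop

lemma meas_pp {n : ℕ} {F : Fin n → Fin n → (Fin n → ℂ) → ℂ} (h : ∀ a b, Measurable (F a b)) :
    Measurable (fun z => pp (fun a b => F a b z)) := by
  unfold pp
  refine Finset.measurable_prod _ fun a _ => Finset.measurable_prod _ fun b _ => ?_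
  split_ifs
  · exact h a b
  · exact measurable_const

lemma meas_Df {n : ℕ} (t : ℂ) (a b : Fin n) : Measurable (fun z : Fin n → ℂ => Df t (z a) (z b)) := by
  unfold Df; fun_prop

lemma meas_c1 {n : ℕ} (p : Par) (a : Fin n) : Measurable (fun z : Fin n → ℂ => c1 p (z a)) := by
  unfold c1 Np; fun_prop

lemma meas_Delz {n : ℕ} (p : Par) : Measurable (Delz p : (Fin n → ℂ) → ℂ) := by
  unfold Delz
  exact (meas_pp fun a b => (meas_Df _ a b).inv).mul
    (Finset.measurable_prod _ fun a _ => (meas_c1 p a).inv)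

lemma meas_zact {n : ℕ} (w : Wn n) : Measurable (zact w : (Fin n → ℂ) → Fin n → ℂ) := by
  unfold zact
  refine measurable_pi_lambda _ fun j => ?_
  unfold binv
  split_ifs <;> fun_prop

lemma meas_zpow (m : ℤ) : Measurable (fun x : ℂ => x ^ m) := by
  cases m with
  | ofNat k => simp only [Int.ofNat_eq_natCast, zpow_natCast]; fun_prop
  | negSucc k => simp only [zpow_negSucc]; fun_prop

lemma meas_Cm {n : ℕ} (p : Par) (lam : Fin n → ℤ) :
    Measurable (fun z : Fin n → ℂ => Cz p lam z * mono lam z) := by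
  unfold Cz mono
  refine ((meas_pp fun a b => (meas_Df _ a b)).mul
    (Finset.measurable_prod _ fun a _ => ?_)).mul (Finset.measurable_prod _ fun a _ => ?_)
  · split_ifs
    · exact meas_c1 p a
    · exact measurable_const
  · exact (meas_zpow _).comp (measurable_pi_apply a)

lemma meas_Az {n : ℕ} (p : Par) (lam : Fin n → ℤ) : Measurable (Az p lam : (Fin n → ℂ) → ℂ) := by
  unfold Az
  exact Finset.measurable_sum _ fun w _ => (meas_Cm p lam).comp (meas_zact w)


/-- index set of the orthogonality integrand as a `Fg` -/
def Fo {n : ℕ} (p : Par) (lam mu : Fin n → ℤ) (v : Wn n) (η : Fin n → ℝ) : ℂ :=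
    Fg (fun a => No (lam a) (mu (v.1.symm a)) (v.2 (v.1.symm a)))
      (fun a => Rso p (mu (v.1.symm a)) (v.2 (v.1.symm a)))
      (fun a => if 0 < lam a then (fun _ => 1) else R1 p)
      (fun a b => Rmo p.t (decide (v.1.symm a < v.1.symm b)) (v.2 (v.1.symm a)) (v.2 (v.1.symm b)))
      (fun a b => Rpo p.t (decide (v.1.symm a < v.1.symm b)) (v.2 (v.1.symm a)) (v.2 (v.1.symm b)))
      (fun _ _ _ => 1) (fun _ _ _ => 1) η

lemma disc_Rso (p : Par) (m : ℤ) (s : Bool) : Disc (Rso p m s) := by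
  unfold Rso
  split_ifs
  exacts [disc_one, disc_R2 p, disc_R1 p]

lemma disc_Rmo (p : Par) (f a b : Bool) : Disc (Rmo p.t f a b) := by
  unfold Rmo
  split_ifs
  exacts [disc_one, disc_Uf p.ht, disc_Uf p.ht, disc_one]

lemma disc_Rpo (p : Par) (f a b : Bool) : Disc (Rpo p.t f a b) := by
  unfold Rpo
  split_ifs
  exacts [disc_one, disc_Uf p.ht, disc_one, disc_Uf p.ht]

lemma No_ge (l m : ℤ) (s : Bool) (hm : 0 ≤ m) : l - m ≤ No l m s := by
  unfold No
  split_ifs <;> omega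

lemma Fo_good {n : ℕ} {ω : Fin n → ℤ} (p : Par) (lam mu : Fin n → ℤ) (v : Wn n)
    (hω : ∀ a, 0 ≤ ω a) (hanti : ∀ a b, a ≤ b → ω b ≤ ω a) (hlam : ∀ a, ω a ≠ 0 → 0 < lam a) :
    ∃ F0, Good ω (pr (fun a => No (lam a) (mu (v.1.symm a)) (v.2 (v.1.symm a))) ω)
      (Fo p lam mu v) F0 := by
  have h1 : ∀ a, Disc (if 0 < lam a then (fun _ => 1) else R1 p) := fun a => by
    split_ifs
    exacts [disc_one, disc_R1 p]
  have h2 : ∀ a, ω a ≠ 0 → (if 0 < lam a then (fun _ => 1) else R1 p) = fun _ => 1 := fun a ha => by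
    rw [if_pos (hlam a ha)]
  have h := Fg_good (n := n) (ω := ω) (N := fun a => No (lam a) (mu (v.1.symm a)) (v.2 (v.1.symm a)))
      (Rs := fun a => Rso p (mu (v.1.symm a)) (v.2 (v.1.symm a)))
      (Rt := fun a => if 0 < lam a then (fun _ => 1) else R1 p)
      (Rm := fun a b => Rmo p.t (decide (v.1.symm a < v.1.symm b)) (v.2 (v.1.symm a)) (v.2 (v.1.symm b)))
      (Rp := fun a b => Rpo p.t (decide (v.1.symm a < v.1.symm b)) (v.2 (v.1.symm a)) (v.2 (v.1.symm b)))
      (Qm := fun _ _ _ => 1) (Qp := fun _ _ _ => 1)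
      hω hanti (fun a => disc_Rso p _ _) h1 (fun a b => disc_Rmo p _ _ _)
      (fun a b => disc_Rpo p _ _ _) (fun a b => disc_one) (fun a b => disc_one) h2
      (fun _ _ _ => rfl) (fun _ _ _ => rfl)
  exact ⟨_, h⟩

lemma Fo_integral {n : ℕ} (p : Par) {lam mu : Fin n → ℤ} (hl : IsPart n lam) (hm : IsPart n mu)
    (l : Fin n) (h1 : ∀ a < l, lam a = mu a) (h2 : mu l < lam l) (v w : Wn n) :
    Integrable (fun ξ => Fo p lam mu v (actR w ξ)) (volume.restrict (box n)) ∧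
    ∫ ξ in box n, Fo p lam mu v (actR w ξ) = 0 := by
  set ω : Fin n → ℤ := fun a => if a ≤ l then 1 else 0 with hω
  have hanti : ∀ a b, a ≤ b → ω b ≤ ω a := by
    intro a b hab
    simp only [hω]
    split_ifs with h3 h4
    · exact le_rfl
    · exact absurd (hab.trans h3) h4
    · norm_num
    · exact le_rfl
  obtain ⟨F0, hgood⟩ := Fo_good p lam mu v
      (fun a => by simp only [hω]; split_ifs <;> norm_num) hanti
      (fun a ha => by
        have hal : a ≤ l := by by_contra h; simp [hω, h] at ha
        have := hl.1 a l hal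
        have := hm.2 l
        omega)
  have hM : 0 < pr (fun a => No (lam a) (mu (v.1.symm a)) (v.2 (v.1.symm a))) ω := by
    have hmono : Monovary mu ω := by
      intro a b hab
      refine hm.1 b a ?_
      by_contra hh
      exact absurd (hanti a b (not_le.1 hh).le) (not_le.2 hab)
    have hr := hmono.sum_comp_perm_mul_le_sum_mul (σ := v.1.symm)
    calc (0:ℤ) < lam l - mu l := by omega
      _ = ∑ a, (lam a - mu a) * ω a := by
          rw [Finset.sum_eq_single l]
          · simp [hω]
          · intro b _ hb
            rcases lt_or_gt_of_ne hb with h | h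
            · simp [h1 b h]
            · simp [hω, h.not_ge]
          · simp
      _ ≤ ∑ a, (lam a - mu (v.1.symm a)) * ω a := by
          simp only [sub_mul, Finset.sum_sub_distrib]
          omega
      _ ≤ _ := by
          unfold pr
          refine Finset.sum_le_sum fun a _ => ?_
          refine mul_le_mul_of_nonneg_right (No_ge _ _ _ (hm.2 _)) ?_
          simp only [hω]; split_ifs <;> norm_num
  refine ⟨cont_integrable (hgood.1.comp (actR_cont w)), ?_⟩
  rw [hgood.integral hM.le]
  simp [hM.ne']

/-- the pairing integrand expanded -/
lemma orth_expand {n : ℕ} (p : Par) {lam mu : Fin n → ℤ} (hl : IsPart n lam) (hm : IsPart n mu) :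
    ∃ v : Wn n → Wn n → Wn n, ∀ ξ : Fin n → ℝ, Gen (ze ξ) →
    Az p lam (ze ξ) * (starRingEnd ℂ) (Az p mu (ze ξ)) * Wz p (ze ξ) =
      ∑ w : Wn n, ∑ w' : Wn n, Fo p lam mu (v w w') (actR w ξ) := by
  choose v hv using fun w w' : Wn n => zact_exists w w'
  refine ⟨v, fun ξ hg => ?_⟩
  rw [Az, Az, map_sum, Finset.sum_mul_sum, Finset.sum_mul]
  refine Finset.sum_congr rfl fun w _ => ?_
  rw [Finset.sum_mul]
  refine Finset.sum_congr rfl fun w' _ => ?_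
  have hc : (fun j => (starRingEnd ℂ) (zact w' (ze ξ) j)) = zact (v w w') (zact w (ze ξ)) := by
    rw [← hv]
    exact funext fun j => conj_unit (zact_norm w' (ze_norm ξ) j)
  rw [map_mul, conj_Cz, conj_mono, hc, ← Wz_zact p w, ← ze_actR]
  exact term_eq p lam mu hl.2 hm.2 _ _ (by rw [ze_actR]; exact hg.zact (ze_ne ξ) w)

lemma orth_aux {n : ℕ} (p : Par) {lam mu : Fin n → ℤ} (hl : IsPart n lam) (hm : IsPart n mu)
    (l : Fin n) (h1 : ∀ a < l, lam a = mu a) (h2 : mu l < lam l) :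
    ∫ ξ in box n, Az p lam (ze ξ) * (starRingEnd ℂ) (Az p mu (ze ξ)) * Wz p (ze ξ) = 0 := by
  obtain ⟨v, hv⟩ := orth_expand p hl hm
  have hae : (fun ξ => Az p lam (ze ξ) * (starRingEnd ℂ) (Az p mu (ze ξ)) * Wz p (ze ξ))
      =ᵐ[volume.restrict (box n)]
      fun ξ => ∑ w : Wn n, ∑ w' : Wn n, Fo p lam mu (v w w') (actR w ξ) := by
    filter_upwards [gen_ae_box n] with ξ hg using hv ξ hg
  rw [integral_congr_ae hae, integral_finsetSum _ fun w _ => integrable_finsetSum _ fun w' _ =>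
    (Fo_integral p hl hm l h1 h2 _ _).1]
  refine Finset.sum_eq_zero fun w _ => ?_
  rw [integral_finsetSum _ fun w' _ => (Fo_integral p hl hm l h1 h2 _ _).1]
  exact Finset.sum_eq_zero fun w' _ => (Fo_integral p hl hm l h1 h2 _ _).2

lemma orth {n : ℕ} (p : Par) {lam mu : Fin n → ℤ} (hl : IsPart n lam) (hm : IsPart n mu)
    (hne : lam ≠ mu) :
    ∫ ξ in box n, Az p lam (ze ξ) * (starRingEnd ℂ) (Az p mu (ze ξ)) * Wz p (ze ξ) = 0 := by
  classical
  have hex : (univ.filter fun a => lam a ≠ mu a).Nonempty := by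
    obtain ⟨a, ha⟩ := Function.ne_iff.1 hne
    exact ⟨a, by simpa using ha⟩
  set l := (univ.filter fun a => lam a ≠ mu a).min' hex with hldef
  have hmem := Finset.min'_mem _ hex
  rw [← hldef] at hmem
  have hlne : lam l ≠ mu l := by simpa using hmem
  have hlow : ∀ a < l, lam a = mu a := by
    intro a ha
    by_contra hh
    exact absurd (Finset.min'_le _ a (by simpa using hh)) (not_le.2 ha)
  rcases lt_or_gt_of_ne hlne with h | h
  · have h3 := orth_aux p hm hl l (fun a ha => (hlow a ha).symm) h
    have h4 := congrArg (starRingEnd ℂ) h3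
    rw [← integral_conj, map_zero] at h4
    rw [← h4]
    congr 1
    funext ξ
    rw [map_mul, map_mul, Complex.conj_conj, ← norm_Delz, Complex.conj_ofReal]
    ring
  · exact orth_aux p hl hm l hlow h


lemma small_set {m : ℕ} {S : Finset ℕ} (hc : S.card = m) (hs : ∑ x ∈ S, x ≤ ∑ x ∈ range m, x) :
    ∀ x ∈ S, x < m := by
  classical
  by_contra hcon
  push Not at hcon
  obtain ⟨x0, hx0, hx0m⟩ := hcon
  have hcard : (S \ range m).card = (range m \ S).card := by
    have h1 := Finset.card_sdiff_add_card_inter S (range m)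
    have h2 := Finset.card_sdiff_add_card_inter (range m) S
    rw [Finset.inter_comm] at h2
    simp only [card_range] at h2
    omega
  have hpos : 0 < (S \ range m).card := Finset.card_pos.2 ⟨x0, by simp [hx0, hx0m]⟩
  have e1 := Finset.sum_inter_add_sum_sdiff S (range m) (fun x => x)
  have e2 := Finset.sum_inter_add_sum_sdiff (range m) S (fun x => x)
  rw [Finset.inter_comm] at e2
  have b1 : (S \ range m).card * m ≤ ∑ x ∈ S \ range m, x := by
    rw [← smul_eq_mul]
    refine Finset.card_nsmul_le_sum _ _ _ fun x hx => ?_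
    simp at hx; exact hx.2
  have b2 : ∑ x ∈ range m \ S, (x + 1) ≤ (range m \ S).card * m := by
    rw [← smul_eq_mul]
    refine Finset.sum_le_card_nsmul _ _ _ fun x hx => ?_
    simp at hx; omega
  rw [Finset.sum_add_distrib] at b2
  simp only [sum_const, smul_eq_mul, mul_one] at b2
  rw [← hcard] at b2
  omega

lemma sum_rev (m : ℕ) : ∑ j : Fin m, (m - 1 - (j : ℕ)) = ∑ x ∈ range m, x := by
  rw [Fin.sum_univ_eq_sum_range (fun j => m - 1 - j) m]
  exact Finset.sum_range_reflect (fun x => x) m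

lemma alt_mono {m : ℕ} (α : Fin m → ℕ) (hα : ∑ j, α j ≤ ∑ j : Fin m, (m - 1 - (j : ℕ))) :
    ∃ c : ℂ, ∀ X : Fin m → ℂ, (Matrix.of fun i j => X i ^ α j).det = c * (Matrix.vandermonde X).det := by
  classical
  by_cases hinj : Function.Injective α
  · have hlt : ∀ j, α j < m := by
      intro j
      refine small_set (S := univ.image α) ?_ ?_ _ (Finset.mem_image_of_mem _ (mem_univ j))
      · rw [Finset.card_image_of_injective _ hinj]; simp
      · rw [Finset.sum_image (fun a _ b _ h => hinj h), ← sum_rev]; exact hα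
    let τ0 : Fin m → Fin m := fun j => ⟨α j, hlt j⟩
    have hτ0 : Function.Injective τ0 := fun a b h => hinj (by simpa [τ0] using h)
    let τ : Equiv.Perm (Fin m) := Equiv.ofBijective τ0 (Finite.injective_iff_bijective.1 hτ0)
    refine ⟨(Equiv.Perm.sign τ : ℤ), fun X => ?_⟩
    have := Matrix.det_permute' τ (Matrix.vandermonde X)
    rw [← this]
    rfl
  · rw [Function.Injective] at hinj
    push Not at hinj
    obtain ⟨a, b, hab, hne⟩ := hinj
    refine ⟨0, fun X => ?_⟩
    rw [zero_mul]
    exact Matrix.det_zero_of_column_eq hne fun i => by simp [hab]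

lemma alt_poly {m : ℕ} (G : MvPolynomial (Fin m) ℂ)
    (hG : G.totalDegree ≤ ∑ j : Fin m, (m - 1 - (j : ℕ))) :
    ∃ c : ℂ, ∀ X : Fin m → ℂ, ∑ σ : Equiv.Perm (Fin m), ((Equiv.Perm.sign σ : ℤ) : ℂ) *
      MvPolynomial.eval (fun j => X (σ j)) G = c * (Matrix.vandermonde X).det := by
  classical
  have h : ∀ d : Fin m →₀ ℕ, d ∈ G.support → ∃ c : ℂ, ∀ X : Fin m → ℂ,
      (Matrix.of fun i j => X i ^ d j).det = c * (Matrix.vandermonde X).det := by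
    intro d hd
    refine alt_mono _ (le_trans ?_ hG)
    have := MvPolynomial.le_totalDegree hd
    rwa [Finsupp.sum_fintype _ _ (by simp)] at this
  choose! c hc using h
  refine ⟨∑ d ∈ G.support, G.coeff d * c d, fun X => ?_⟩
  simp only [MvPolynomial.eval_eq', Finset.mul_sum]
  rw [Finset.sum_comm, Finset.sum_mul]
  refine Finset.sum_congr rfl fun d hd => ?_
  rw [mul_assoc, ← hc d hd, Matrix.det_apply', Finset.mul_sum]
  refine Finset.sum_congr rfl fun σ _ => ?_
  simp only [Matrix.of_apply]
  ring

/-- numerator letter -/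
def Af (t : ℂ) (s : Bool) (x : ℂ) : ℂ := if s then x + t ^ 2 * x⁻¹ else x⁻¹ + t ^ 2 * x

lemma sign_poly {m : ℕ} (t : ℂ) (j : Fin m) (S : Finset (Fin m)) : ∀ r : ℕ,
    ∃ Q : MvPolynomial (Fin m) ℂ, Q.totalDegree ≤ S.card + r ∧ ∀ z : Fin m → ℂ, z j ≠ 0 →
      ∑ s : Bool, (Af t s (z j)) ^ r * ∏ b ∈ S, (t * (z b + (z b)⁻¹) - Af t s (z j)) =
        MvPolynomial.eval (fun i => z i + (z i)⁻¹) Q := by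
  classical
  induction S using Finset.induction_on with
  | empty =>
    intro r
    induction r using Nat.strong_induction_on with
    | _ r ih =>
      match r, ih with
      | 0, _ => exact ⟨MvPolynomial.C 2, by simp, fun z _ => by norm_num⟩
      | 1, _ =>
        refine ⟨MvPolynomial.C (1 + t ^ 2) * MvPolynomial.X j, ?_, fun z hz => ?_⟩
        · refine (MvPolynomial.totalDegree_mul _ _).trans ?_
          rw [MvPolynomial.totalDegree_C, MvPolynomial.totalDegree_X]; simp
        · simp [Af]; ring
      | r + 2, ih =>
        obtain ⟨Q1, d1, h1⟩ := ih (r + 1) (by omega)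
        obtain ⟨Q0, d0, h0⟩ := ih r (by omega)
        refine ⟨MvPolynomial.C (1 + t ^ 2) * MvPolynomial.X j * Q1 -
          (MvPolynomial.C (t ^ 2) * MvPolynomial.X j ^ 2 + MvPolynomial.C ((1 - t ^ 2) ^ 2)) * Q0,
          ?_, fun z hz => ?_⟩
        · refine (MvPolynomial.totalDegree_sub _ _).trans (max_le ?_ ?_)
          · refine (MvPolynomial.totalDegree_mul _ _).trans ?_
            have : (MvPolynomial.C (1 + t ^ 2) * MvPolynomial.X j : MvPolynomial (Fin m) ℂ).totalDegree ≤ 1 := by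
              refine (MvPolynomial.totalDegree_mul _ _).trans ?_
              rw [MvPolynomial.totalDegree_C, MvPolynomial.totalDegree_X]
            omega
          · refine (MvPolynomial.totalDegree_mul _ _).trans ?_
            have : (MvPolynomial.C (t ^ 2) * MvPolynomial.X j ^ 2 + MvPolynomial.C ((1 - t ^ 2) ^ 2) :
                MvPolynomial (Fin m) ℂ).totalDegree ≤ 2 := by
              refine (MvPolynomial.totalDegree_add _ _).trans (max_le ?_ ((MvPolynomial.totalDegree_C _).le.trans (by omega)))
              refine (MvPolynomial.totalDegree_mul _ _).trans ?_
              rw [MvPolynomial.totalDegree_C, MvPolynomial.totalDegree_X_pow]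
            omega
        · simp only [map_sub, map_mul, map_add, map_pow, MvPolynomial.eval_C, MvPolynomial.eval_X,
            ← h1 z hz, ← h0 z hz]
          simp only [Fintype.sum_bool, Finset.prod_empty, mul_one]
          have ha : Af t true (z j) + Af t false (z j) = (1 + t ^ 2) * (z j + (z j)⁻¹) := by
            simp [Af]; ring
          have hb : Af t true (z j) * Af t false (z j) =
              t ^ 2 * (z j + (z j)⁻¹) ^ 2 + (1 - t ^ 2) ^ 2 := by
            simp only [Af, if_true, Bool.false_eq_true, if_false]
            have : z j * (z j)⁻¹ = 1 := mul_inv_cancel₀ hz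
            linear_combination (1 + t ^ 4 - 2 * t ^ 2) * this
          rw [← ha, ← hb]
          ring
  | insert k S hk ih =>
    intro r
    obtain ⟨Q1, d1, h1⟩ := ih (r + 1)
    obtain ⟨Q0, d0, h0⟩ := ih r
    refine ⟨MvPolynomial.C t * MvPolynomial.X k * Q0 - Q1, ?_, fun z hz => ?_⟩
    · rw [Finset.card_insert_of_notMem hk]
      refine (MvPolynomial.totalDegree_sub _ _).trans (max_le ?_ (by omega))
      refine (MvPolynomial.totalDegree_mul _ _).trans ?_
      have : (MvPolynomial.C t * MvPolynomial.X k : MvPolynomial (Fin m) ℂ).totalDegree ≤ 1 := by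
        refine (MvPolynomial.totalDegree_mul _ _).trans ?_
        simp
      omega
    · simp only [map_sub, map_mul, MvPolynomial.eval_C, MvPolynomial.eval_X,
            ← h1 z hz, ← h0 z hz, Finset.prod_insert hk, Fintype.sum_bool]
      ring

lemma Df_X {t x y : ℂ} (hx : x ≠ 0) (hy : y ≠ 0) :
    Df t x y = (t * (y + y⁻¹) - (x⁻¹ + t ^ 2 * x)) / ((y + y⁻¹) - (x + x⁻¹)) := by
  rw [Df, ← mul_div_mul_left _ ((y + y⁻¹) - (x + x⁻¹)) (neg_ne_zero.2 hx)]
  congr 1 <;> field_simp <;> ring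


lemma pp_Ioi {m : ℕ} (f : Fin m → Fin m → ℂ) : pp f = ∏ a, ∏ b ∈ Ioi a, f a b := by
  unfold pp
  refine Finset.prod_congr rfl fun a _ => ?_
  rw [← Finset.prod_filter]
  refine Finset.prod_congr ?_ fun _ _ => rfl
  ext b; simp

lemma X_ne {x y : ℂ} (hx : x ≠ 0) (hy : y ≠ 0) (h1 : x ≠ y) (h2 : x * y ≠ 1) :
    x + x⁻¹ ≠ y + y⁻¹ := by
  intro h
  have : (x - y) * (x * y - 1) = 0 := by
    field_simp at h
    linear_combination h
  rcases mul_eq_zero.1 this with h | h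
  · exact h1 (sub_eq_zero.1 h)
  · exact h2 (sub_eq_zero.1 h)

lemma Df_binv {t x y : ℂ} (hx : x ≠ 0) (hy : y ≠ 0) (s r : Bool) :
    Df t (binv s x) (binv r y) = (t * (y + y⁻¹) - Af t s x) / ((y + y⁻¹) - (x + x⁻¹)) := by
  rw [Df_X (binv_ne hx s) (binv_ne hy r)]
  cases s <;> cases r <;> simp [binv, Af, add_comm]

theorem kappa_const (m : ℕ) (t : ℂ) : ∃ κ : ℂ, ∀ z : Fin m → ℂ, (∀ j, z j ≠ 0) →
    (∀ a b, a ≠ b → z a ≠ z b ∧ z a * z b ≠ 1) →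
    ∑ u : Wn m, pp (fun a b => Df t (zact u z a) (zact u z b)) = κ := by
  classical
  have hQ := fun a : Fin m => sign_poly t a (Ioi a) 0
  choose Q dQ hQ using hQ
  obtain ⟨c, hc⟩ := alt_poly (∏ a, Q a) (by
    refine (MvPolynomial.totalDegree_finsetProd _ _).trans (Finset.sum_le_sum fun a _ => ?_)
    refine (dQ a).trans ?_
    simp [Fin.card_Ioi])
  refine ⟨c, fun z hz hg => ?_⟩
  set X : Fin m → ℂ := fun i => z i + (z i)⁻¹ with hX
  have hV : (Matrix.vandermonde X).det ≠ 0 := by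
    rw [Matrix.det_vandermonde_ne_zero_iff]
    intro a b hab
    by_contra hne
    exact X_ne (hz a) (hz b) (hg a b hne).1 (hg a b hne).2 hab
  rw [eq_comm, ← mul_div_cancel_right₀ c hV, ← hc X, Finset.sum_div]
  rw [show (∑ u : Wn m, pp (fun a b => Df t (zact u z a) (zact u z b))) =
    ∑ σ : Equiv.Perm (Fin m), ∑ s : Fin m → Bool,
      pp (fun a b => Df t (zact (σ, s) z a) (zact (σ, s) z b)) from Fintype.sum_prod_type _]
  refine Finset.sum_congr rfl fun σ _ => ?_
  have hVσ : (Matrix.vandermonde (fun j => X (σ j))).det =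
      ((Equiv.Perm.sign σ : ℤ) : ℂ) * (Matrix.vandermonde X).det := by
    rw [← Matrix.det_permute σ (Matrix.vandermonde X)]
    rfl
  have hss : ((Equiv.Perm.sign σ : ℤ) : ℂ) * ((Equiv.Perm.sign σ : ℤ) : ℂ) = 1 := by
    rw [← Int.cast_mul, ← Units.val_mul, Int.units_mul_self]; simp
  have key : ∀ s : Fin m → Bool, pp (fun a b => Df t (zact (σ, s) z a) (zact (σ, s) z b)) =
      (∏ a, ∏ b ∈ Ioi a, (t * (z (σ b) + (z (σ b))⁻¹) - Af t (s a) (z (σ a)))) /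
        (Matrix.vandermonde (fun j => X (σ j))).det := by
    intro s
    rw [Matrix.det_vandermonde, pp_Ioi, ← Finset.prod_div_distrib]
    refine Finset.prod_congr rfl fun a _ => ?_
    rw [← Finset.prod_div_distrib]
    refine Finset.prod_congr rfl fun b _ => ?_
    simp only [zact]
    rw [Df_binv (hz _) (hz _)]
  simp only [key]
  rw [← Finset.sum_div]
  have hswap := Finset.prod_univ_sum (fun _ : Fin m => (univ : Finset Bool))
    (fun a s => ∏ b ∈ Ioi a, (t * (z (σ b) + (z (σ b))⁻¹) - Af t s (z (σ a))))
  rw [Fintype.piFinset_univ] at hswap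
  rw [← hswap, map_prod]
  have : ∀ a, MvPolynomial.eval (fun j => X (σ j)) (Q a) =
      ∑ s : Bool, ∏ b ∈ Ioi a, (t * (z (σ b) + (z (σ b))⁻¹) - Af t s (z (σ a))) := by
    intro a
    have := hQ a (fun j => z (σ j)) (hz _)
    simp only [pow_zero, one_mul] at this
    exact this.symm
  simp only [this]
  rw [hVσ, mul_div_assoc, div_mul_eq_div_div, mul_div_assoc', div_left_inj' hV, eq_div_iff (left_ne_zero_of_mul_eq_one hss)]
  linear_combination (∏ a, ∑ s : Bool, ∏ b ∈ Ioi a, (t * (z (σ b) + (z (σ b))⁻¹) - Af t s (z (σ a)))) * hss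

lemma Df_zero1 {t x y : ℂ} (h : t * (x * y⁻¹) = 1) : Df t x y = 0 := by simp [Df, h]
lemma Df_zero2 {t x y : ℂ} (h : t * (x * y) = 1) : Df t x y = 0 := by simp [Df, h]

lemma pp_zero {m : ℕ} {f : Fin m → Fin m → ℂ} {a b : Fin m} (hab : a < b) (h : f a b = 0) : pp f = 0 := by
  unfold pp
  exact Finset.prod_eq_zero (mem_univ a) (Finset.prod_eq_zero (mem_univ b) (by simp [hab, h]))

/-- at the principal point only the stabilizer contributes -/
lemma principal_fix {m : ℕ} {t : ℂ} (ht0 : t ≠ 0) (u : Wn m)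
    (h : pp (fun a b => Df t (zact u (fun j : Fin m => t ^ (m - 1 - (j : ℕ))) a)
      (zact u (fun j : Fin m => t ^ (m - 1 - (j : ℕ))) b)) ≠ 0) :
    zact u (fun j : Fin m => t ^ (m - 1 - (j : ℕ))) = fun j : Fin m => t ^ (m - 1 - (j : ℕ)) := by
  set z : Fin m → ℂ := fun j : Fin m => t ^ (m - 1 - (j : ℕ)) with hz
  set y := zact u z with hy
  have hz0 : ∀ j, z j ≠ 0 := fun j => pow_ne_zero _ ht0
  have k1 : ∀ a b, a < b → t * (y a * (y b)⁻¹) ≠ 1 := fun a b hab h1 =>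
    h (pp_zero hab (Df_zero1 h1))
  have k2 : ∀ a b, a < b → t * (y a * y b) ≠ 1 := fun a b hab h1 =>
    h (pp_zero hab (Df_zero2 h1))
  have hstep : ∀ i i' : Fin m, (i : ℕ) + 1 = i' → z i = t * z i' := by
    intro i i' hi
    simp only [hz, ← pow_succ']
    congr 1
    omega
  have hpos : ∀ i, y (u.1.symm i) = binv (u.2 (u.1.symm i)) (z i) := by
    intro i; simp [hy, zact]
  have H : ∀ k : ℕ, ∀ i : Fin m, m - 1 - (i : ℕ) = k → y (u.1.symm i) = z i := by
    intro k
    induction k with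
    | zero =>
      intro i hi
      rw [hpos]
      simp only [hz, hi, pow_zero, binv]; simp
    | succ k ih =>
      intro i hi
      have hi' : (i : ℕ) + 1 < m := by omega
      have hy' := ih ⟨i + 1, hi'⟩ (by simp; omega)
      have hzi := hstep i ⟨i + 1, hi'⟩ rfl
      rw [hpos]
      cases hs : u.2 (u.1.symm i) with
      | false => simp [binv]
      | true =>
        exfalso
        have hyi := hpos i
        rw [hs] at hyi
        simp only [binv, if_true] at hyi
        have hne : u.1.symm i ≠ u.1.symm ⟨i + 1, hi'⟩ := by
          intro h
          have := congrArg Fin.val (u.1.symm.injective h)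
          simp at this
        have e : t * (y (u.1.symm i) * y (u.1.symm ⟨i + 1, hi'⟩)) = 1 := by
          rw [hyi, hy', hzi]
          have := hz0 ⟨i + 1, hi'⟩
          field_simp
        rcases lt_or_gt_of_ne hne with hl | hl
        · exact k2 _ _ hl e
        · exact k2 _ _ hl (by rw [← e]; ring)
  have H' : ∀ i, y (u.1.symm i) = z i := fun i => H _ i rfl
  have hmono : StrictMono u.1.symm := by
    cases m with
    | zero => intro a; exact a.elim0
    | succ m =>
      rw [Fin.strictMono_iff_lt_succ]
      intro i
      by_contra hcon
      have hne : u.1.symm i.castSucc ≠ u.1.symm i.succ := by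
        intro h
        have := congrArg Fin.val (u.1.symm.injective h)
        simp at this
      have hl := lt_of_le_of_ne (not_lt.1 hcon) hne.symm
      refine k1 _ _ hl ?_
      rw [H', H', hstep i.castSucc i.succ (by simp)]
      have := hz0 i.succ
      field_simp
  have hid : ∀ i, u.1.symm i = i := by
    intro i
    let e : Fin m ≃o Fin m := hmono.orderIsoOfSurjective _ u.1.symm.surjective
    have : e = OrderIso.refl _ := Subsingleton.elim _ _
    have := congrArg (fun e : Fin m ≃o Fin m => e i) this
    simpa [e] using this
  funext i
  rw [← H' i, hid i]

theorem kappa (m : ℕ) (t : ℝ) (ht : |t| < 1) (ht0 : t ≠ 0) : ∃ κ : ℂ, κ ≠ 0 ∧ ∀ z : Fin m → ℂ,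
    (∀ j, z j ≠ 0) → (∀ a b, a ≠ b → z a ≠ z b ∧ z a * z b ≠ 1) →
    ∑ u : Wn m, pp (fun a b => Df t (zact u z a) (zact u z b)) = κ := by
  classical
  obtain ⟨κ, hκ⟩ := kappa_const m t
  refine ⟨κ, ?_, hκ⟩
  have htc : (t : ℂ) ≠ 0 := by exact_mod_cast ht0
  have hpow : ∀ k : ℕ, k ≠ 0 → (t : ℂ) ^ k ≠ 1 := by
    intro k hk h
    have := congrArg norm h
    rw [norm_pow, Complex.norm_real, Real.norm_eq_abs, norm_one] at this
    exact (pow_lt_one₀ (abs_nonneg t) ht hk).ne this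
  set z : Fin m → ℂ := fun j : Fin m => (t : ℂ) ^ (m - 1 - (j : ℕ)) with hz
  have hz0 : ∀ j, z j ≠ 0 := fun j => pow_ne_zero _ htc
  have hdiv : ∀ a b : Fin m, a < b → z a = z b * (t : ℂ) ^ ((b : ℕ) - (a : ℕ)) := by
    intro a b hab
    have := Fin.lt_def.1 hab
    simp only [hz, ← pow_add]
    congr 1; omega
  have hmulz : ∀ a b : Fin m, z a * z b = (t : ℂ) ^ ((m - 1 - (a : ℕ)) + (m - 1 - (b : ℕ))) := by
    intro a b; simp only [hz, pow_add]
  have hlt : ∀ a b : Fin m, a < b → z a ≠ z b ∧ z a * z b ≠ 1 := by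
    intro a b hab
    have := Fin.lt_def.1 hab
    constructor
    · rw [hdiv a b hab]
      intro h
      exact hpow _ (by omega) (mul_left_cancel₀ (hz0 b) (h.trans (mul_one _).symm))
    · rw [hmulz]; exact hpow _ (by omega)
  have hg : ∀ a b, a ≠ b → z a ≠ z b ∧ z a * z b ≠ 1 := by
    intro a b hab
    rcases lt_or_gt_of_ne hab with h | h
    · exact hlt a b h
    · exact ⟨(hlt b a h).1.symm, by rw [mul_comm]; exact (hlt b a h).2⟩
  have hne : pp (fun a b => Df t (z a) (z b)) ≠ 0 := by
    refine pp_ne_zero fun a b hab => ?_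
    have hab' := Fin.lt_def.1 hab
    have e1 : z a * (z b)⁻¹ = (t : ℂ) ^ ((b : ℕ) - (a : ℕ)) := by
      rw [hdiv a b hab]; have := hz0 b; field_simp
    rw [Df, e1, hmulz, ← pow_succ', ← pow_succ']
    refine div_ne_zero (mul_ne_zero ?_ ?_) (mul_ne_zero ?_ ?_) <;>
    exact sub_ne_zero.2 (hpow _ (by omega)).symm
  rw [← hκ z hz0 hg]
  have hsum : ∀ u : Wn m, pp (fun a b => Df t (zact u z a) (zact u z b)) =
      if zact u z = z then pp (fun a b => Df t (z a) (z b)) else 0 := by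
    intro u
    split_ifs with h
    · rw [h]
    · by_contra h'
      exact h (principal_fix htc u h')
  rw [Finset.sum_congr rfl fun u _ => hsum u, ← Finset.sum_filter, Finset.sum_const, nsmul_eq_mul]
  refine mul_ne_zero ?_ hne
  have : (univ.filter fun u : Wn m => zact u z = z).Nonempty := by
    refine ⟨(1, fun _ => false), ?_⟩
    simp only [mem_filter, mem_univ, true_and]
    funext j
    simp [zact, binv]
  exact_mod_cast (Finset.card_pos.2 this).ne'


lemma pp_add {k m : ℕ} (f : Fin (k + m) → Fin (k + m) → ℂ) :
    pp f = pp (fun a b => f (Fin.castAdd m a) (Fin.castAdd m b)) *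
      (∏ a : Fin k, ∏ b : Fin m, f (Fin.castAdd m a) (Fin.natAdd k b)) *
      pp (fun a b => f (Fin.natAdd k a) (Fin.natAdd k b)) := by
  unfold pp
  rw [Fin.prod_univ_add]
  simp only [Fin.prod_univ_add (fun b : Fin (k + m) => _), Finset.prod_mul_distrib]
  have h1 : ∀ (a : Fin k) (b : Fin m), Fin.castAdd m a < Fin.natAdd k b := by
    intro a b; rw [Fin.lt_def]; simp; omega
  have h2 : ∀ (a : Fin k) (b : Fin m), ¬ Fin.natAdd k b < Fin.castAdd m a := by
    intro a b; exact (h1 a b).not_gt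
  have h3 : ∀ (a b : Fin k), Fin.castAdd m a < Fin.castAdd m b ↔ a < b := by
    intro a b; simp only [Fin.lt_def, Fin.val_castAdd]
  have h4 : ∀ (a b : Fin m), Fin.natAdd k a < Fin.natAdd k b ↔ a < b := by
    intro a b; simp only [Fin.lt_def, Fin.val_castAdd, Fin.val_natAdd]; omega
  simp only [h1, h2, h3, h4, if_true, if_false, Finset.prod_const_one, one_mul]

/-- embedding of the stabilizer -/
def emb (k m : ℕ) (u : Wn m) : Wn (k + m) :=
  (finSumFinEquiv.permCongr (Equiv.sumCongr (Equiv.refl (Fin k)) u.1),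
    Fin.append (fun _ => false) u.2)

lemma zact_emb_cast {k m : ℕ} (u : Wn m) (z : Fin (k + m) → ℂ) (i : Fin k) :
    zact (emb k m u) z (Fin.castAdd m i) = z (Fin.castAdd m i) := by
  simp [zact, emb, binv, Equiv.permCongr_apply]

lemma zact_emb_nat {k m : ℕ} (u : Wn m) (z : Fin (k + m) → ℂ) (i : Fin m) :
    zact (emb k m u) z (Fin.natAdd k i) = zact u (fun j => z (Fin.natAdd k j)) i := by
  simp [zact, emb, Equiv.permCongr_apply]

/-- reduced C function -/
def Cp {n : ℕ} (p : Par) (lam : Fin n → ℤ) (z : Fin n → ℂ) : ℂ :=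
  pp (fun a b => if 0 < lam a then Df p.t (z a) (z b) else 1) *
    ∏ a, if 0 < lam a then c1 p (z a) else 1

lemma sum_zact {n : ℕ} (u : Wn n) (f : (Fin n → ℂ) → ℂ) (z : Fin n → ℂ) :
    ∑ w : Wn n, f (zact u (zact w z)) = ∑ w : Wn n, f (zact w z) := by
  simp only [zact_comp]
  have hinj : Function.Injective
      (fun w : Wn n => ((w.1 * u.1, fun j => xor (u.2 j) (w.2 (u.1 j))) : Wn n)) := by
    rintro ⟨a, b⟩ ⟨a', b'⟩ h
    simp only [Prod.mk.injEq, mul_left_inj] at h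
    obtain ⟨h1, h2⟩ := h
    subst h1
    refine Prod.ext rfl ?_
    funext j
    have := congrFun h2 (u.1.symm j)
    simpa using this
  exact Function.Bijective.sum_comp (Finite.injective_iff_bijective.1 hinj) (fun w => f (zact w z))

lemma stab_inv {k m : ℕ} (p : Par) (lam : Fin (k + m) → ℤ) (h1 : ∀ i, 0 < lam (Fin.castAdd m i))
    (h2 : ∀ i, lam (Fin.natAdd k i) = 0) (u : Wn m) (z : Fin (k + m) → ℂ) :
    Cz p lam (zact (emb k m u) z) * mono lam (zact (emb k m u) z) =
    (Cp p lam z * mono lam z) * pp (fun a b => Df p.t (zact u (fun j => z (Fin.natAdd k j)) a)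
      (zact u (fun j => z (Fin.natAdd k j)) b)) := by
  have h3 : ∀ a : Fin k, ∏ b : Fin m, Df p.t (z (Fin.castAdd m a)) (zact u (fun j => z (Fin.natAdd k j)) b)
      = ∏ b : Fin m, Df p.t (z (Fin.castAdd m a)) (z (Fin.natAdd k b)) := by
    intro a
    rw [← Equiv.prod_comp u.1 (fun b => Df p.t (z (Fin.castAdd m a)) (z (Fin.natAdd k b)))]
    refine Finset.prod_congr rfl fun b _ => ?_
    simp only [zact]
    cases u.2 b <;> simp [binv, Df_inv_right]
  unfold Cz Cp mono
  rw [pp_add, pp_add]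
  simp only [Fin.prod_univ_add, zact_emb_cast, zact_emb_nat, h1, h2, if_true, h3, lt_irrefl, if_false,
    neg_zero, zpow_zero, Finset.prod_const_one, mul_one]
  have : pp (fun _ _ : Fin m => (1:ℂ)) = 1 := by simp [pp]
  rw [this]
  ring

lemma part_split {n : ℕ} {lam : Fin n → ℤ} (hl : IsPart n lam) :
    ∃ k m : ℕ, ∃ _ : n = k + m, (∀ i : Fin n, (i : ℕ) < k → 0 < lam i) ∧
      ∀ i : Fin n, k ≤ (i : ℕ) → lam i = 0 := by
  classical
  by_cases hex : ∃ i, ∃ hi : i < n, lam ⟨i, hi⟩ = 0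
  · have hs := Nat.find_spec hex
    obtain ⟨hi, h0⟩ := hs
    refine ⟨Nat.find hex, n - Nat.find hex, by omega, fun i hlt => ?_, fun i hle => ?_⟩
    · have := Nat.find_min hex hlt
      push Not at this
      exact lt_of_le_of_ne (hl.2 i) (this i.2).symm
    · have := hl.1 ⟨Nat.find hex, hi⟩ i (by rw [Fin.le_def]; exact hle)
      have := hl.2 i
      omega
  · push Not at hex
    refine ⟨n, 0, by omega, fun i _ => ?_, fun i h => absurd i.2 (not_lt.2 h)⟩
    exact lt_of_le_of_ne (hl.2 i) (hex i i.2).symm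

/-- reduced symmetric sum -/
def Ap {n : ℕ} (p : Par) (lam : Fin n → ℤ) (z : Fin n → ℂ) : ℂ :=
  ∑ w : Wn n, Cp p lam (zact w z) * mono lam (zact w z)

lemma Az_Ap {n : ℕ} (p : Par) (ht0 : p.t ≠ 0) {lam : Fin n → ℤ} (hl : IsPart n lam) :
    ∃ κ : ℂ, κ ≠ 0 ∧ ∀ z : Fin n → ℂ, (∀ j, z j ≠ 0) → Gen z → κ * Az p lam z = Ap p lam z := by
  obtain ⟨k, m, rfl, h1, h2⟩ := part_split hl
  obtain ⟨κ, hκ, hs⟩ := kappa m p.t p.ht ht0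
  refine ⟨(Fintype.card (Wn m) : ℂ) / κ, div_ne_zero ?_ hκ, fun z hz hg => ?_⟩
  · haveI : Nonempty (Wn m) := ⟨(1, fun _ => false)⟩
    exact_mod_cast Fintype.card_ne_zero
  have e1 : (Fintype.card (Wn m) : ℂ) * Az p lam z = κ * Ap p lam z := by
    calc (Fintype.card (Wn m) : ℂ) * Az p lam z = ∑ u : Wn m, Az p lam z := by
          simp
      _ = ∑ u : Wn m, ∑ w : Wn (k + m), (Cz p lam (zact (emb k m u) (zact w z)) *
            mono lam (zact (emb k m u) (zact w z))) := by
          refine Finset.sum_congr rfl fun u _ => ?_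
          rw [sum_zact (emb k m u) (fun y => Cz p lam y * mono lam y) z]
          rfl
      _ = ∑ w : Wn (k + m), κ * (Cp p lam (zact w z) * mono lam (zact w z)) := by
          rw [Finset.sum_comm]
          refine Finset.sum_congr rfl fun w _ => ?_
          have hgw := hg.zact hz w
          have hzw : ∀ j, zact w z j ≠ 0 := fun j => binv_ne (hz _) _
          rw [← hs (fun j => zact w z (Fin.natAdd k j)) (fun j => hzw _) (fun a b hab =>
            hgw.1 _ _ (fun h => hab (by simpa using h))), mul_comm, Finset.mul_sum]
          refine Finset.sum_congr rfl fun u _ => ?_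
          exact stab_inv p lam (fun i => h1 _ (by simp)) (fun i => h2 _ (by simp)) u _
      _ = κ * Ap p lam z := by rw [Ap, Finset.mul_sum]
  field_simp
  exact e1


/-- short factor on the zero block -/
def Rx {n : ℕ} (p : Par) (lam : Fin n → ℤ) (a : Fin n) : ℂ → ℂ :=
  if 0 < lam a then (fun _ => 1) else R1 p

/-- pair factor on the zero block -/
def Qx {n : ℕ} (p : Par) (lam : Fin n → ℤ) (a _b : Fin n) : ℂ → ℂ :=
  if 0 < lam a then (fun _ => 1) else Dm p.t

/-- transformed weight -/
def nu {n : ℕ} (lam : Fin n → ℤ) (w : Wn n) : Fin n → ℤ := fun j => sg (w.2 j) * lam (w.1 j)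

lemma disc_Rx {n : ℕ} (p : Par) (lam : Fin n → ℤ) (a : Fin n) : Disc (Rx p lam a) := by
  unfold Rx; split_ifs
  exacts [disc_one, disc_R1 p]

lemma disc_Qx {n : ℕ} (p : Par) (lam : Fin n → ℤ) (a b : Fin n) : Disc (Qx p lam a b) := by
  unfold Qx; split_ifs
  exacts [disc_one, disc_Dm p.ht]

lemma chi_nu {n : ℕ} (lam : Fin n → ℤ) (w : Wn n) (ξ : Fin n → ℝ) :
    chi (-lam) ξ = chi (-nu lam w) (actR w ξ) := by
  unfold chi
  congr 2
  rw [← Equiv.sum_comp w.1]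
  refine Finset.sum_congr rfl fun j _ => ?_
  simp only [Pi.neg_apply, nu, actR]
  have : ((sg (w.2 j) : ℤ) : ℂ) * (sg (w.2 j) : ℤ) = 1 := by exact_mod_cast sg_sq (w.2 j)
  push_cast
  linear_combination (lam (w.1 j) : ℂ) * (ξ (w.1 j) : ℂ) * this

lemma short_pos2 (p : Par) {x : ℂ} (hx : ‖x‖ = 1) (h : x ^ 2 ≠ 1) (l : ℤ) :
    (if 0 < l then c1 p x else 1) * Ws p x =
      R1 p x⁻¹ * (if 0 < l then (fun _ => 1) else R1 p : ℂ → ℂ) x := by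
  have c1x := c1_ne p hx h
  rw [Ws, mul_inv, c1_inv p x⁻¹]
  split_ifs
  · field_simp
  · rw [c1_inv p x]; ring

lemma term_pos {n : ℕ} (p : Par) (lam N : Fin n → ℤ) (η : Fin n → ℝ) (hg : Gen (ze η)) :
    Cp p lam (ze η) * chi N η * Wz p (ze η) =
    Fg N (fun _ => R1 p) (Rx p lam) (fun _ _ => Dm p.t) (fun _ _ => Dm p.t)
      (Qx p lam) (Qx p lam) η := by
  rw [Fg_ze, chi_eq]
  have hz := ze_norm η
  generalize ze η = z at *
  unfold Cp Wz
  have e4 : ∀ A B C D E : ℂ, A * B * C * (D * E) = (C * (B * E)) * (A * D) := by intros; ring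
  rw [e4, ← Finset.prod_mul_distrib, ← Finset.prod_mul_distrib, pp_mul]
  congr 1
  · refine Finset.prod_congr rfl fun a _ => ?_
    rw [short_pos2 p (hz a) (hg.2 a)]
    rfl
  · refine pp_congr fun a b hab => ?_
    obtain ⟨h1, h2⟩ := hg.1 a b hab.ne
    have hD := Df_ne p.ht (hz a) (hz b) h1 h2
    unfold Qx
    rw [← Df_inv_eq]
    split_ifs
    · rw [Wp_eq hD, mul_one, mul_one]
    · rw [← Df_eq_inv, one_mul, Wp, mul_inv, mul_comm]

/-- square root of the leading density -/
def Tz {n : ℕ} (p : Par) (lam : Fin n → ℤ) (z : Fin n → ℂ) : ℂ :=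
  (∏ a, Rx p lam a (z a)) * pp (fun a b => Qx p lam a b (z a * (z b)⁻¹) * Qx p lam a b (z a * z b))

lemma R1_conj (p : Par) (x : ℂ) : (starRingEnd ℂ) (R1 p x) = R1 p ((starRingEnd ℂ) x) := by
  simp [R1, Np]

lemma Dm_conj (t : ℝ) (x : ℂ) : (starRingEnd ℂ) (Dm t x) = Dm t ((starRingEnd ℂ) x) := by
  simp [Dm]

lemma pp_conj {n : ℕ} (f : Fin n → Fin n → ℂ) :
    (starRingEnd ℂ) (pp f) = pp (fun a b => (starRingEnd ℂ) (f a b)) := by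
  unfold pp
  simp only [map_prod]
  refine Finset.prod_congr rfl fun a _ => Finset.prod_congr rfl fun b _ => ?_
  split_ifs <;> simp

lemma Rx_conj {n : ℕ} (p : Par) (lam : Fin n → ℤ) (a : Fin n) (x : ℂ) :
    (starRingEnd ℂ) (Rx p lam a x) = Rx p lam a ((starRingEnd ℂ) x) := by
  unfold Rx; split_ifs
  · simp
  · exact R1_conj p x

lemma Qx_conj {n : ℕ} (p : Par) (lam : Fin n → ℤ) (a b : Fin n) (x : ℂ) :
    (starRingEnd ℂ) (Qx p lam a b x) = Qx p lam a b ((starRingEnd ℂ) x) := by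
  unfold Qx; split_ifs
  · simp
  · exact Dm_conj _ x

lemma Tz_sq {n : ℕ} (p : Par) (lam : Fin n → ℤ) (η : Fin n → ℝ) :
    Fg 0 (Rx p lam) (Rx p lam) (Qx p lam) (Qx p lam) (Qx p lam) (Qx p lam) η =
      ((‖Tz p lam (ze η)‖ ^ 2 : ℝ) : ℂ) := by
  rw [← Complex.normSq_eq_norm_sq, ← Complex.mul_conj, Fg_ze, Tz, map_mul, map_prod, pp_conj]
  have h : ∀ j, (starRingEnd ℂ) (ze η j) = (ze η j)⁻¹ := fun j => conj_unit (ze_norm η j)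
  simp only [map_mul, Rx_conj, Qx_conj, map_inv₀, h, inv_inv, Pi.zero_apply, zpow_zero, one_mul]
  rw [mul_mul_mul_comm, ← Finset.prod_mul_distrib, pp_mul]
  congr 1
  · exact Finset.prod_congr rfl fun a _ => mul_comm _ _
  · exact pp_congr fun a b _ => mul_comm _ _

lemma Tz_cont {n : ℕ} (p : Par) (lam : Fin n → ℤ) :
    Continuous (fun η : Fin n → ℝ => ‖Tz p lam (ze η)‖ ^ 2) := by
  have h := Fg_good (n := n) (ω := 0) (N := 0) (Rs := Rx p lam) (Rt := Rx p lam) (Rm := Qx p lam)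
    (Rp := Qx p lam) (Qm := Qx p lam) (Qp := Qx p lam) (fun _ => le_rfl) (fun _ _ _ => le_rfl)
    (disc_Rx p lam) (disc_Rx p lam) (disc_Qx p lam) (disc_Qx p lam) (disc_Qx p lam) (disc_Qx p lam)
    (fun a h => absurd rfl h) (fun a b h => absurd rfl h) (fun a b h => absurd rfl h)
  have h1 := Complex.continuous_re.comp h.1
  refine h1.congr fun η => ?_
  simp only [Function.comp]
  rw [Tz_sq, Complex.ofReal_re]

lemma Tz_ne {n : ℕ} (p : Par) (lam : Fin n → ℤ) (η : Fin n → ℝ) (hg : Gen (ze η)) :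
    Tz p lam (ze η) ≠ 0 := by
  have hz := ze_norm η
  have hz0 := ze_ne η
  generalize ze η = z at *
  unfold Tz
  refine mul_ne_zero (Finset.prod_ne_zero_iff.2 fun a _ => ?_) (pp_ne_zero fun a b hab => ?_)
  · unfold Rx; split_ifs
    · exact one_ne_zero
    · rw [← c1_inv]; exact inv_ne_zero (c1_ne p (hz a) (hg.2 a))
  · obtain ⟨h1, h2⟩ := hg.1 a b hab.ne
    unfold Qx; split_ifs
    · simp
    · rw [← Df_eq_inv]
      exact inv_ne_zero (Df_ne p.ht (hz a) (hz b) h1 h2)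

/-- the direction of expansion -/
def om {n : ℕ} (lam : Fin n → ℤ) : Fin n → ℤ :=
  fun a => if 0 < lam a then lam a + ((n : ℤ) - (a : ℕ)) else 0

lemma Dm_zero (t : ℝ) : Dm t 0 = 1 := by simp [Dm]
lemma R1_zero (p : Par) : R1 p 0 = 1 := by simp [R1, Np]

lemma om_nonneg {n : ℕ} {lam : Fin n → ℤ} (a : Fin n) : 0 ≤ om lam a := by
  unfold om; split_ifs
  · have := a.2; omega
  · exact le_rfl

lemma om_ne {n : ℕ} {lam : Fin n → ℤ} (a : Fin n) : om lam a ≠ 0 ↔ 0 < lam a := by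
  unfold om; split_ifs with h
  · have := a.2; simp only [h, iff_true]; omega
  · simp [h]

lemma om_lt {n : ℕ} {lam : Fin n → ℤ} (hl : IsPart n lam) {a b : Fin n} (hab : a < b)
    (ha : 0 < lam a) : om lam b < om lam a := by
  have h1 := hl.1 a b hab.le
  have h2 := a.2
  have h3 := Fin.lt_def.1 hab
  unfold om; split_ifs
  · omega
  · omega

lemma om_anti {n : ℕ} {lam : Fin n → ℤ} (hl : IsPart n lam) (a b : Fin n) (hab : a ≤ b) :
    om lam b ≤ om lam a := by
  rcases hab.lt_or_eq with h | h
  · by_cases ha : 0 < lam a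
    · exact (om_lt hl h ha).le
    · have h1 := hl.1 a b hab
      have hb : ¬ 0 < lam b := by omega
      simp [om, ha, hb]
  · rw [h]

lemma Fg0_eq {n : ℕ} (p : Par) {lam : Fin n → ℤ} (hl : IsPart n lam) (η : Fin n → ℝ) :
    Fg0 (om lam) 0 (fun _ => R1 p) (Rx p lam) (fun _ _ => Dm p.t) (fun _ _ => Dm p.t)
      (Qx p lam) (Qx p lam) η = ((‖Tz p lam (ze η)‖ ^ 2 : ℝ) : ℂ) := by
  rw [← Tz_sq]
  unfold Fg0 Fg
  congr 1
  · congr 1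
    refine Finset.prod_congr rfl fun a _ => ?_
    congr 1
    by_cases ha : 0 < lam a
    · rw [if_neg ((om_ne a).2 ha)]; simp [Rx, ha, R1_zero]
    · rw [if_pos (not_not.1 (mt (om_ne a).1 ha))]; simp [Rx, ha]
  · refine pp_congr fun a b hab => ?_
    congr 1
    have hb0 := om_nonneg (lam := lam) b
    by_cases ha : 0 < lam a
    · have := om_lt hl hab ha
      rw [if_neg (by omega), if_neg (by omega)]; simp [Qx, ha, Dm_zero]
    · have h0 : om lam a = 0 := not_not.1 (mt (om_ne a).1 ha)
      have h1 := om_anti hl a b hab.le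
      rw [if_pos (by omega), if_pos (by omega)]; simp [Qx, ha]

lemma nu_le {n : ℕ} {lam : Fin n → ℤ} (hl : IsPart n lam) (w : Wn n) (j : Fin n) :
    nu lam w j ≤ lam (w.1 j) := by
  have := hl.2 (w.1 j)
  unfold nu sg; split_ifs <;> omega

lemma pr_om {n : ℕ} {lam : Fin n → ℤ} (hl : IsPart n lam) (w : Wn n) :
    0 ≤ pr (lam - nu lam w) (om lam) ∧ (pr (lam - nu lam w) (om lam) = 0 → lam - nu lam w = 0) := by
  set ρ : Fin n → ℤ := fun a => if 0 < lam a then ((n : ℤ) - (a : ℕ)) else 0 with hρ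
  have hom : ∀ a, om lam a = lam a + ρ a := by
    intro a
    have := hl.2 a
    simp only [om, hρ]; split_ifs <;> omega
  have hρ0 : ∀ a, 0 ≤ ρ a := by
    intro a; have := a.2; simp only [hρ]; split_ifs <;> omega
  have hρa : ∀ a b, a ≤ b → ρ b ≤ ρ a := by
    intro a b hab
    have h1 := hl.1 a b hab
    have h3 := Fin.le_def.1 hab
    have := a.2
    simp only [hρ]; split_ifs <;> omega
  have hmono : Monovary lam ρ := by
    intro a b hab
    refine hl.1 b a ?_
    by_contra hh
    exact absurd (hρa a b (not_le.1 hh).le) (not_le.2 hab)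
  have hr := hmono.sum_comp_perm_mul_le_sum_mul (σ := w.1)
  have e1 : 0 ≤ ∑ a, (lam a - nu lam w a) * ρ a := by
    have : ∑ a, nu lam w a * ρ a ≤ ∑ a, lam (w.1 a) * ρ a :=
      Finset.sum_le_sum fun a _ => mul_le_mul_of_nonneg_right (nu_le hl w a) (hρ0 a)
    simp only [sub_mul, Finset.sum_sub_distrib]
    omega
  have e2 : ∑ a, nu lam w a ^ 2 = ∑ a, lam a ^ 2 := by
    rw [← Equiv.sum_comp w.1 (fun a => lam a ^ 2)]
    refine Finset.sum_congr rfl fun a _ => ?_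
    unfold nu; rw [mul_pow, pow_two (sg _), sg_sq, one_mul]
  have e3 : 2 * pr (lam - nu lam w) (om lam) =
      ∑ a, (lam a - nu lam w a) ^ 2 + 2 * ∑ a, (lam a - nu lam w a) * ρ a := by
    have : ∑ a, (lam a - nu lam w a) ^ 2 = 2 * ∑ a, (lam a - nu lam w a) * lam a := by
      have : ∀ a, (lam a - nu lam w a) ^ 2 = 2 * ((lam a - nu lam w a) * lam a) +
        (nu lam w a ^ 2 - lam a ^ 2) := fun a => by ring
      simp only [this, Finset.sum_add_distrib, Finset.sum_sub_distrib, e2, sub_self, add_zero,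
        ← Finset.mul_sum]
    rw [this, ← mul_add, ← Finset.sum_add_distrib, pr]
    congr 1
    refine Finset.sum_congr rfl fun a _ => ?_
    rw [hom, Pi.sub_apply]; ring
  have e4 : 0 ≤ ∑ a, (lam a - nu lam w a) ^ 2 := Finset.sum_nonneg fun a _ => sq_nonneg _
  refine ⟨by omega, fun h => ?_⟩
  have e5 : ∑ a, (lam a - nu lam w a) ^ 2 = 0 := by omega
  rw [Finset.sum_eq_zero_iff_of_nonneg fun a _ => sq_nonneg _] at e5
  funext a
  exact pow_eq_zero_iff two_ne_zero |>.1 (e5 a (mem_univ a))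

lemma Fp_good {n : ℕ} (p : Par) {lam : Fin n → ℤ} (hl : IsPart n lam) (N : Fin n → ℤ) :
    Good (om lam) (pr N (om lam))
      (Fg N (fun _ => R1 p) (Rx p lam) (fun _ _ => Dm p.t) (fun _ _ => Dm p.t) (Qx p lam) (Qx p lam))
      (Fg0 (om lam) N (fun _ => R1 p) (Rx p lam) (fun _ _ => Dm p.t) (fun _ _ => Dm p.t)
        (Qx p lam) (Qx p lam)) :=
  Fg_good (n := n) (ω := om lam) (N := N) (Rs := fun _ => R1 p) (Rt := Rx p lam)
    (Rm := fun _ _ => Dm p.t) (Rp := fun _ _ => Dm p.t) (Qm := Qx p lam) (Qp := Qx p lam)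
    om_nonneg (om_anti hl) (fun _ => disc_R1 p) (disc_Rx p lam) (fun _ _ => disc_Dm p.ht)
    (fun _ _ => disc_Dm p.ht) (disc_Qx p lam) (disc_Qx p lam)
    (fun a h => by simp [Rx, (om_ne a).1 h]) (fun a b h => by simp [Qx, (om_ne a).1 h])
    (fun a b h => by simp [Qx, (om_ne a).1 h])

lemma test_integral {n : ℕ} (p : Par) {lam : Fin n → ℤ} (hl : IsPart n lam) :
    ∫ ξ in box n, Ap p lam (ze ξ) * chi (-lam) ξ * Wz p (ze ξ) ≠ 0 := by
  classical
  have hae : (fun ξ => Ap p lam (ze ξ) * chi (-lam) ξ * Wz p (ze ξ)) =ᵐ[volume.restrict (box n)]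
      fun ξ => ∑ w : Wn n, Fg (lam - nu lam w) (fun _ => R1 p) (Rx p lam) (fun _ _ => Dm p.t)
        (fun _ _ => Dm p.t) (Qx p lam) (Qx p lam) (actR w ξ) := by
    filter_upwards [gen_ae_box n] with ξ hg
    rw [Ap, Finset.sum_mul, Finset.sum_mul]
    refine Finset.sum_congr rfl fun w _ => ?_
    rw [← term_pos p lam _ _ (by rw [ze_actR]; exact hg.zact (ze_ne ξ) w), chi_nu lam w ξ,
      ← Wz_zact p w, ← ze_actR, mono_ze, mul_assoc (Cp _ _ _), ← chi_add, ← sub_eq_add_neg]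
  have hint : ∀ w : Wn n, Integrable (fun ξ => Fg (lam - nu lam w) (fun _ => R1 p) (Rx p lam)
      (fun _ _ => Dm p.t) (fun _ _ => Dm p.t) (Qx p lam) (Qx p lam) (actR w ξ))
      (volume.restrict (box n)) :=
    fun w => cont_integrable ((Fp_good p hl _).1.comp (actR_cont w))
  rw [integral_congr_ae hae, integral_finsetSum _ fun w _ => hint w]
  have hval : ∀ w : Wn n, ∫ ξ in box n, Fg (lam - nu lam w) (fun _ => R1 p) (Rx p lam)
        (fun _ _ => Dm p.t) (fun _ _ => Dm p.t) (Qx p lam) (Qx p lam) (actR w ξ) =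
      ((if lam - nu lam w = 0 then ∫ ξ in box n, ‖Tz p lam (ze (actR w ξ))‖ ^ 2 else 0 : ℝ) : ℂ) := by
    intro w
    rw [(Fp_good p hl _).integral (pr_om hl w).1]
    by_cases h0 : lam - nu lam w = 0
    · have : pr (lam - nu lam w) (om lam) = 0 := by rw [h0]; simp [pr]
      simp only [this, if_true]
      rw [h0, if_pos rfl]
      refine Eq.trans ?_ integral_ofReal
      congr 1
      funext ξ
      exact Fg0_eq p hl _
    · simp [h0, mt (pr_om hl w).2 h0]
  rw [Finset.sum_congr rfl fun w _ => hval w, ← Complex.ofReal_sum]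
  refine Complex.ofReal_ne_zero.2 (ne_of_gt ?_)
  refine Finset.sum_pos' (fun w _ => ?_) ⟨(1, fun _ => false), mem_univ _, ?_⟩
  · split_ifs
    · exact integral_nonneg fun ξ => by positivity
    · exact le_rfl
  · rw [if_pos (by funext j; simp [nu, sg])]
    have hid : ∀ ξ : Fin n → ℝ, actR ((1, fun _ => false) : Wn n) ξ = ξ := by
      intro ξ; funext j; simp [actR, sg]
    simp only [hid]
    rw [integral_pos_iff_support_of_nonneg (fun ξ => by positivity) (cont_integrable (Tz_cont p lam))]
    have hsupp : ∀ᵐ ξ ∂(volume.restrict (box n)), ξ ∈ Function.support (fun η : Fin n → ℝ => ‖Tz p lam (ze η)‖ ^ 2) := by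
      filter_upwards [gen_ae_box n] with ξ hg
      exact pow_ne_zero _ (norm_ne_zero_iff.2 (Tz_ne p lam ξ hg))
    have hm : (volume.restrict (box n)) (Function.support (fun η : Fin n → ℝ => ‖Tz p lam (ze η)‖ ^ 2))
        = (volume.restrict (box n)) Set.univ := measure_congr (Filter.eventuallyEq_univ.2 hsupp)
    rw [hm, Measure.restrict_apply_univ, box, volume_pi_pi]
    refine pos_iff_ne_zero.2 (Finset.prod_ne_zero_iff.2 fun j _ => ?_)
    rw [Real.volume_Icc]
    have := Real.pi_pos
    simpa using this


lemma one_sub_ofReal_ne {x : ℝ} (h : |x| < 1) : (1 - (x : ℂ)) ≠ 0 := by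
  have h1 := abs_lt.1 h
  have : (1 - x : ℝ) ≠ 0 := by linarith [h1.2] |> fun (h : 0 < 1 - x) => h.ne'
  exact_mod_cast this

lemma tn_real {n : ℕ} (t : ℝ) (j : Fin n) : tn n (t : ℂ) j = ((t ^ (n - 1 - (j : ℕ)) : ℝ) : ℂ) := by
  have : en n j = ((n - 1 - (j : ℕ) : ℕ) : ℤ) := by
    have := j.2
    unfold en; omega
  rw [tn, this, zpow_natCast]; push_cast; rfl

lemma ccf_ne {n : ℕ} (p : Par) (ht0 : p.t ≠ 0) (h00 : p.t0 ≠ 0) (lam : Fin n → ℤ) :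
    ccf n p.t p.t0 p.t1 p.t2 p.t3 lam ≠ 0 := by
  have hpow : ∀ k : ℕ, |p.t ^ k| ≤ 1 := fun k => by
    rw [abs_pow]; exact pow_le_one₀ (abs_nonneg _) p.ht.le
  have h3 : ∀ a b : ℝ, |a| < 1 → |b| < 1 → ∀ k : ℕ, |a * b * p.t ^ k| < 1 := by
    intro a b ha hb k
    rw [abs_mul, abs_mul]
    have h1 : |a| * |b| < 1 := mul_lt_one_of_nonneg_of_lt_one_left (abs_nonneg _) ha hb.le
    exact mul_lt_one_of_nonneg_of_lt_one_left (by positivity) h1 (hpow k)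
  unfold ccf
  refine Finset.prod_ne_zero_iff.2 fun j _ => ?_
  have hf : ∀ b : ℝ, |b| < 1 → (1 - (p.t0 : ℂ) * (b : ℂ) * tn n (p.t : ℂ) j) ≠ 0 := by
    intro b hb
    rw [tn_real]
    have := one_sub_ofReal_ne (h3 p.t0 b p.h0 hb (n - 1 - (j : ℕ)))
    push_cast at this ⊢
    exact this
  have ht1 : (p.t : ℂ) ≠ 0 := by exact_mod_cast ht0
  have ht2 : (p.t0 : ℂ) ≠ 0 := by exact_mod_cast h00
  refine div_ne_zero (mul_ne_zero (mul_ne_zero (zpow_ne_zero _ ht2) (zpow_ne_zero _ ht1))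
    (one_sub_ofReal_ne p.ht)) (mul_ne_zero (mul_ne_zero ?_ ?_) ?_)
  · have : |p.t ^ ((j : ℕ) + 1)| < 1 := by
      rw [abs_pow]; exact pow_lt_one₀ (abs_nonneg _) p.ht (by omega)
    have := one_sub_ofReal_ne this
    push_cast at this
    exact_mod_cast this
  · split_ifs
    · rw [tn_real]
      have : (1 + p.t ^ (n - 1 - (j : ℕ)) : ℝ) ≠ 0 := by
        rcases Nat.eq_zero_or_pos (n - 1 - (j : ℕ)) with h | h
        · rw [h]; norm_num
        · have h1 : |p.t ^ (n - 1 - (j : ℕ))| < 1 := by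
            rw [abs_pow]; exact pow_lt_one₀ (abs_nonneg _) p.ht (by omega)
          have := (abs_lt.1 h1).1
          intro h2; linarith
      exact_mod_cast this
    · exact one_ne_zero
  · split_ifs
    · exact one_ne_zero
    · exact mul_ne_zero (mul_ne_zero (hf _ p.h1) (hf _ p.h2)) (hf _ p.h3)

lemma hilbert_aux {ι E : Type*} [NormedAddCommGroup E] [InnerProductSpace ℂ E] [CompleteSpace E]
    (v : ι → E) (horth : ∀ i j, i ≠ j → inner ℂ (v i) (v j) = 0) (N : ι → ℝ) (hN : ∀ i, 0 < N i)
    (hn : ∀ i, inner ℂ (v i) (v i) = (N i : ℂ)) (f : ι → ℂ)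
    (hf : Summable fun i => ‖f i‖ ^ 2 * (N i)⁻¹) :
    ∃ F : E, HasSum (fun i => (f i * (((N i)⁻¹ : ℝ) : ℂ)) • v i) F ∧ ∀ i, f i = inner ℂ (v i) F := by
  classical
  have hfam : OrthogonalFamily ℂ (fun i => (Submodule.span ℂ {v i} : Submodule ℂ E))
      (fun i => (Submodule.span ℂ {v i} : Submodule ℂ E).subtypeₗᵢ) := by
    intro i j hij x y
    obtain ⟨a, ha⟩ := Submodule.mem_span_singleton.1 x.2
    obtain ⟨b, hb⟩ := Submodule.mem_span_singleton.1 y.2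
    change inner ℂ (x : E) (y : E) = 0
    rw [← ha, ← hb, inner_smul_left, inner_smul_right, horth i j hij]; simp
  have hnorm : ∀ i, ‖v i‖ ^ 2 = N i := by
    intro i
    have := hn i
    rw [inner_self_eq_norm_sq_to_K] at this
    refine Complex.ofReal_injective ?_
    rw [← this, Complex.ofReal_pow]
    rfl
  have hs := (hfam.summable_iff_norm_sq_summable fun i =>
    (⟨(f i * (((N i)⁻¹ : ℝ) : ℂ)) • v i,
      Submodule.smul_mem _ _ (Submodule.mem_span_singleton_self _)⟩ :
        (Submodule.span ℂ {v i} : Submodule ℂ E))).2 (by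
    refine hf.congr fun i => ?_
    rw [Submodule.coe_norm, norm_smul, norm_mul, mul_pow, mul_pow, hnorm, Complex.norm_real,
      Real.norm_of_nonneg (inv_nonneg.2 (hN i).le)]
    have := (hN i).ne'
    field_simp)
  refine ⟨_, hs.hasSum, fun i => ?_⟩
  have h1 := (hs.hasSum.mapL (innerSL ℂ (v i)))
  have h2 : HasSum (fun j => (innerSL ℂ (v i)) ((f j * (((N j)⁻¹ : ℝ) : ℂ)) • v j)) (f i) := by
    have := hasSum_ite_eq i (f i)
    convert this using 1
    funext j
    rw [innerSL_apply_apply, inner_smul_right]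
    by_cases hj : j = i
    · subst hj
      rw [if_pos rfl, hn]
      have : (N j : ℂ) ≠ 0 := by exact_mod_cast (hN j).ne'
      push_cast
      field_simp
    · rw [if_neg hj, horth i j (Ne.symm hj), mul_zero]
  exact h2.unique h1

lemma wd_meas {n : ℕ} (p : Par) : Measurable fun xi : Fin n → ℝ => ENNReal.ofReal
    ((norm (Dlt n (p.t : ℂ) (p.t0 : ℂ) (p.t1 : ℂ) (p.t2 : ℂ) (p.t3 : ℂ)
        (fun j => (xi j : ℂ)))) ^ 2) := by
  simp only [Dlt_eq]
  exact (((meas_Delz p).comp meas_ze).norm.pow_const 2).ennreal_ofReal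

lemma P_meas {n : ℕ} (p : Par) (lam : Fin n → ℤ) : Measurable fun xi : Fin n → ℝ =>
    P n (p.t : ℂ) (p.t0 : ℂ) (p.t1 : ℂ) (p.t2 : ℂ) (p.t3 : ℂ) lam (fun j => (xi j : ℂ)) := by
  simp only [P_eq]
  exact ((meas_Az p lam).comp meas_ze).const_mul _

lemma D_meas {n : ℕ} (p : Par) : Measurable fun xi : Fin n → ℝ =>
    Dlt n (p.t : ℂ) (p.t0 : ℂ) (p.t1 : ℂ) (p.t2 : ℂ) (p.t3 : ℂ) (fun j => (xi j : ℂ)) := by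
  simp only [Dlt_eq]
  exact (meas_Delz p).comp meas_ze

lemma wint {n : ℕ} (p : Par) (g : (Fin n → ℝ) → ℂ) :
    ∫ xi, g xi ∂(wmeas n p.t p.t0 p.t1 p.t2 p.t3) = ∫ xi in box n, g xi * Wz p (ze xi) := by
  rw [wmeas, integral_withDensity_eq_integral_toReal_smul (wd_meas p)
    (Filter.Eventually.of_forall fun _ => ENNReal.ofReal_lt_top)]
  congr 1
  funext xi
  rw [ENNReal.toReal_ofReal (by positivity), Dlt_eq, Complex.real_smul, norm_Delz, mul_comm]

lemma PD_int {n : ℕ} (p : Par) (lam : Fin n → ℤ) :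
    Integrable (fun xi : Fin n → ℝ =>
      (norm (P n (p.t : ℂ) (p.t0 : ℂ) (p.t1 : ℂ) (p.t2 : ℂ) (p.t3 : ℂ) lam (fun j => (xi j : ℂ)) *
        Dlt n (p.t : ℂ) (p.t0 : ℂ) (p.t1 : ℂ) (p.t2 : ℂ) (p.t3 : ℂ) (fun j => (xi j : ℂ)))) ^ 2)
      ((volume : Measure (Fin n → ℝ)).restrict (box n)) := by
  obtain ⟨B, hB⟩ := AD_bound (n := n) p lam
  haveI : IsFiniteMeasure ((volume : Measure (Fin n → ℝ)).restrict (box n)) :=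
    ⟨by rw [Measure.restrict_apply_univ]; exact (isCompact_box n).measure_lt_top⟩
  refine Integrable.of_bound (((P_meas p lam).mul (D_meas p)).norm.pow_const 2).aestronglyMeasurable
    ((‖ccf n (p.t : ℂ) (p.t0 : ℂ) (p.t1 : ℂ) (p.t2 : ℂ) (p.t3 : ℂ) lam‖ * B) ^ 2) ?_
  filter_upwards [gen_ae_box n] with xi hg
  rw [Real.norm_of_nonneg (by positivity), P_eq, Dlt_eq, mul_assoc, norm_mul]
  have := hB xi hg
  gcongr

lemma nInt_pos {n : ℕ} (p : Par) (ht0 : p.t ≠ 0) (h00 : p.t0 ≠ 0) {lam : Fin n → ℤ}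
    (hl : IsPart n lam) : 0 < nInt n p.t p.t0 p.t1 p.t2 p.t3 lam := by
  refine lt_of_le_of_ne (integral_nonneg fun xi => by positivity) fun h => ?_
  have h1 := (integral_eq_zero_iff_of_nonneg (fun xi => by positivity) (PD_int p lam)).1 h.symm
  obtain ⟨κ, hκ, hA⟩ := Az_Ap p ht0 hl
  refine test_integral p hl ?_
  refine integral_eq_zero_of_ae ?_
  filter_upwards [h1, gen_ae_box n] with xi h2 hg
  have h3 : P n (p.t : ℂ) (p.t0 : ℂ) (p.t1 : ℂ) (p.t2 : ℂ) (p.t3 : ℂ) lam (fun j => (xi j : ℂ)) *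
        Dlt n (p.t : ℂ) (p.t0 : ℂ) (p.t1 : ℂ) (p.t2 : ℂ) (p.t3 : ℂ) (fun j => (xi j : ℂ)) = 0 := by
    exact norm_eq_zero.1 (pow_eq_zero_iff two_ne_zero |>.1 h2)
  rw [P_eq, Dlt_eq] at h3
  rw [← hA _ (ze_ne xi) hg, ← norm_Delz]
  rcases mul_eq_zero.1 h3 with h4 | h4
  · rcases mul_eq_zero.1 h4 with h5 | h5
    · exact absurd h5 (ccf_ne p ht0 h00 lam)
    · simp [h5]
  · simp [h4]

lemma P_memLp {n : ℕ} (p : Par) (lam : Fin n → ℤ) :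
    MemLp (fun xi : Fin n → ℝ => (starRingEnd ℂ)
      (P n (p.t : ℂ) (p.t0 : ℂ) (p.t1 : ℂ) (p.t2 : ℂ) (p.t3 : ℂ) lam (fun j => (xi j : ℂ))))
      2 (wmeas n p.t p.t0 p.t1 p.t2 p.t3) := by
  have hm : Measurable (fun xi : Fin n → ℝ => (starRingEnd ℂ)
      (P n (p.t : ℂ) (p.t0 : ℂ) (p.t1 : ℂ) (p.t2 : ℂ) (p.t3 : ℂ) lam (fun j => (xi j : ℂ)))) :=
    Complex.continuous_conj.measurable.comp (P_meas p lam)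
  rw [memLp_two_iff_integrable_sq_norm hm.aestronglyMeasurable, wmeas,
    integrable_withDensity_iff (wd_meas p)
    (Filter.Eventually.of_forall fun _ => ENNReal.ofReal_lt_top)]
  refine (PD_int p lam).congr (Filter.Eventually.of_forall fun xi => ?_)
  simp only
  rw [ENNReal.toReal_ofReal (by positivity), RCLike.norm_conj, norm_mul, mul_pow]

lemma inner_P {n : ℕ} (p : Par) (lam : Fin n → ℤ) (F : Lp ℂ 2 (wmeas n p.t p.t0 p.t1 p.t2 p.t3)) :
    inner ℂ ((P_memLp p lam).toLp _) F = ∫ xi, (F : (Fin n → ℝ) → ℂ) xi *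
      P n (p.t : ℂ) (p.t0 : ℂ) (p.t1 : ℂ) (p.t2 : ℂ) (p.t3 : ℂ) lam (fun j => (xi j : ℂ))
        ∂(wmeas n p.t p.t0 p.t1 p.t2 p.t3) := by
  rw [L2.inner_def]
  refine integral_congr_ae ?_
  filter_upwards [(P_memLp p lam).coeFn_toLp] with xi h
  rw [h, RCLike.inner_apply, Complex.conj_conj]

lemma inner_PP {n : ℕ} (p : Par) (lam mu : Fin n → ℤ) :
    inner ℂ ((P_memLp p lam).toLp _) ((P_memLp p mu).toLp _) = ∫ xi in box n,
      (starRingEnd ℂ) (P n (p.t : ℂ) (p.t0 : ℂ) (p.t1 : ℂ) (p.t2 : ℂ) (p.t3 : ℂ) mu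
        (fun j => (xi j : ℂ))) *
      P n (p.t : ℂ) (p.t0 : ℂ) (p.t1 : ℂ) (p.t2 : ℂ) (p.t3 : ℂ) lam (fun j => (xi j : ℂ)) *
        Wz p (ze xi) := by
  rw [inner_P, ← wint]
  refine integral_congr_ae ?_
  filter_upwards [(P_memLp p mu).coeFn_toLp] with xi h
  rw [h]

lemma inner_ne {n : ℕ} (p : Par) {lam mu : Fin n → ℤ} (hl : IsPart n lam) (hm : IsPart n mu)
    (hne : lam ≠ mu) : inner ℂ ((P_memLp p lam).toLp _) ((P_memLp p mu).toLp _) = 0 := by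
  rw [inner_PP]
  have h := orth p hl hm hne
  have : ∀ xi : Fin n → ℝ, (starRingEnd ℂ) (P n (p.t : ℂ) (p.t0 : ℂ) (p.t1 : ℂ) (p.t2 : ℂ)
      (p.t3 : ℂ) mu (fun j => (xi j : ℂ))) *
      P n (p.t : ℂ) (p.t0 : ℂ) (p.t1 : ℂ) (p.t2 : ℂ) (p.t3 : ℂ) lam (fun j => (xi j : ℂ)) *
        Wz p (ze xi) = ((starRingEnd ℂ) (ccf n p.t p.t0 p.t1 p.t2 p.t3 mu) *
        ccf n p.t p.t0 p.t1 p.t2 p.t3 lam) *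
        (Az p lam (ze xi) * (starRingEnd ℂ) (Az p mu (ze xi)) * Wz p (ze xi)) := by
    intro xi
    rw [P_eq, P_eq, map_mul]; ring
  simp only [this]
  rw [integral_const_mul, h, mul_zero]

lemma inner_self_P {n : ℕ} (p : Par) (lam : Fin n → ℤ) :
    inner ℂ ((P_memLp p lam).toLp _) ((P_memLp p lam).toLp _) =
      ((nInt n p.t p.t0 p.t1 p.t2 p.t3 lam : ℝ) : ℂ) := by
  rw [inner_PP, nInt]
  refine Eq.trans ?_ integral_ofReal
  congr 1
  funext xi
  rw [← norm_Delz, ← Complex.normSq_eq_conj_mul_self, Complex.normSq_eq_norm_sq, ← Dlt_eq, norm_mul,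
    mul_pow]
  push_cast
  rfl

theorem fi_par (n : ℕ) (p : Par) (ht0 : p.t ≠ 0) (h00 : p.t0 ≠ 0) (f : Lam n → ℂ)
    (hf : Summable (fun lam : Lam n => ‖f lam‖ ^ 2 * (nInt n p.t p.t0 p.t1 p.t2 p.t3 lam.1)⁻¹)) :
      ∃ (hmem : ∀ lam : Lam n,
          MemLp (fun xi : Fin n → ℝ =>
              (starRingEnd ℂ) (P n (p.t : ℂ) (p.t0 : ℂ) (p.t1 : ℂ) (p.t2 : ℂ) (p.t3 : ℂ) lam.1
                (fun j => (xi j : ℂ))))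
            2 (wmeas n p.t p.t0 p.t1 p.t2 p.t3))
        (fhat : Lp ℂ 2 (wmeas n p.t p.t0 p.t1 p.t2 p.t3)),
        HasSum (fun lam : Lam n =>
          (f lam * (((nInt n p.t p.t0 p.t1 p.t2 p.t3 lam.1)⁻¹ : ℝ) : ℂ)) • (hmem lam).toLp _) fhat ∧
        ∀ lam : Lam n, f lam =
          ∫ xi, (fhat : (Fin n → ℝ) → ℂ) xi *
            P n (p.t : ℂ) (p.t0 : ℂ) (p.t1 : ℂ) (p.t2 : ℂ) (p.t3 : ℂ) lam.1 (fun j => (xi j : ℂ))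
            ∂(wmeas n p.t p.t0 p.t1 p.t2 p.t3) := by
  refine ⟨fun lam => P_memLp p lam.1, ?_⟩
  obtain ⟨F, hF, hi⟩ := hilbert_aux (fun lam : Lam n => (P_memLp p lam.1).toLp _)
    (fun i j hij => inner_ne p i.2 j.2 fun h => hij (Subtype.ext h))
    (fun lam => nInt n p.t p.t0 p.t1 p.t2 p.t3 lam.1) (fun lam => nInt_pos p ht0 h00 lam.2)
    (fun lam => inner_self_P p lam.1) f hf
  exact ⟨F, hF, fun lam => (hi lam).trans (inner_P p lam.1 F)⟩


/-- Fourier inversion / completeness of the hyperoctahedral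
Hall-Littlewood functions. -/
theorem fourier_inversion (n : ℕ) (hn : 1 ≤ n) (t t0 t1 t2 t3 : ℝ)
    (ht : t ∈ Set.Ioo (-1 : ℝ) 1) (htz : t ≠ 0)
    (h0 : t0 ∈ Set.Ioo (-1 : ℝ) 1) (h0z : t0 ≠ 0)
    (h1 : t1 ∈ Set.Ioo (-1 : ℝ) 1) (h1z : t1 ≠ 0)
    (h2 : t2 ∈ Set.Ioo (-1 : ℝ) 1) (h2z : t2 ≠ 0)
    (h3 : t3 ∈ Set.Ioo (-1 : ℝ) 1) (h3z : t3 ≠ 0) :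
    (∀ lam : Lam n,
      Integrable (fun xi : Fin n → ℝ =>
          (norm (P n (t : ℂ) (t0 : ℂ) (t1 : ℂ) (t2 : ℂ) (t3 : ℂ) lam.1
              (fun j => (xi j : ℂ)) *
            Dlt n (t : ℂ) (t0 : ℂ) (t1 : ℂ) (t2 : ℂ) (t3 : ℂ) (fun j => (xi j : ℂ)))) ^ 2)
        ((volume : Measure (Fin n → ℝ)).restrict (box n)) ∧
      0 < nInt n t t0 t1 t2 t3 lam.1) ∧
    ∀ f : Lam n → ℂ,
      Summable (fun lam : Lam n => ‖f lam‖ ^ 2 * (nInt n t t0 t1 t2 t3 lam.1)⁻¹) →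
      ∃ (hmem : ∀ lam : Lam n,
          MemLp (fun xi : Fin n → ℝ =>
              (starRingEnd ℂ) (P n (t : ℂ) (t0 : ℂ) (t1 : ℂ) (t2 : ℂ) (t3 : ℂ) lam.1
                (fun j => (xi j : ℂ))))
            2 (wmeas n t t0 t1 t2 t3))
        (fhat : Lp ℂ 2 (wmeas n t t0 t1 t2 t3)),
        HasSum (fun lam : Lam n =>
          (f lam * (((nInt n t t0 t1 t2 t3 lam.1)⁻¹ : ℝ) : ℂ)) • (hmem lam).toLp _) fhat ∧
        ∀ lam : Lam n, f lam =
          ∫ xi, (fhat : (Fin n → ℝ) → ℂ) xi *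
            P n (t : ℂ) (t0 : ℂ) (t1 : ℂ) (t2 : ℂ) (t3 : ℂ) lam.1 (fun j => (xi j : ℂ))
            ∂(wmeas n t t0 t1 t2 t3) := by
  let p : Par := ⟨t, t0, t1, t2, t3, abs_lt.2 ht, abs_lt.2 h0, abs_lt.2 h1, abs_lt.2 h2, abs_lt.2 h3⟩
  exact ⟨fun lam => ⟨PD_int p lam.1, nInt_pos p htz h0z lam.2⟩,
    fun f hf => fi_par n p htz h0z f hf⟩

end QB

end
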